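/- arXiv:math/0702277 — 4 statements merged into one kernel-verified Lean document; each statement's English description precedes it below -/
import Mathlib

section
/- For every positive integer k, Σ_{σ∈S_k} ∏_{1≤i<j≤k} (s_{σ(i)} − s_{σ(j)} − 1)/(s_{σ(i)} − s_{σ(j)}) = k!, as an identity of rational functions in s_1,…,s_k (equivalently, for all pairwise distinct complex numbers s_1,…,s_k). -/
/-!
Sorting the permutations by `p = σ 0` reduces the identity for `n + 1` variables to the one for `n`
variables and `∑ p, ∏ j ≠ p, (s p - s j - c) / (s p - s j) = n + 1`. For `c ≠ 0` the latter compares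
two expressions for the coefficient of `X ^ n` in `∏ j, (X - s j - c) - ∏ j, (X - s j)`: a sum of
roots, by Vieta, and a sum of values at the nodes `s p`, by Lagrange interpolation.
-/

open Finset Polynomial

section Interpolation

variable {F ι : Type*} [Field F] [DecidableEq ι] {t : Finset ι} {x : ι → F}

theorem sum_prod_sub_div_prod_erase_sub (hx : Set.InjOn x t) (y : ι → F) :
    ∑ i ∈ t, (∏ j ∈ t, (x i - y j)) / ∏ j ∈ t.erase i, (x i - x j) = ∑ i ∈ t, (x i - y i) := by
  obtain rfl | ht := t.eq_empty_or_nonempty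
  · simp
  have degree_lt : (Lagrange.nodal t y - Lagrange.nodal t x).degree < #t := by
    rw [← Lagrange.degree_nodal (v := y)]
    refine degree_sub_lt_left ?_ Lagrange.nodal_ne_zero ?_
    · simp only [Lagrange.degree_nodal]
    · rw [Lagrange.nodal_monic.leadingCoeff, Lagrange.nodal_monic.leadingCoeff]
  have coeff_nodal (z : ι → F) : (Lagrange.nodal t z).coeff (#t - 1) = -∑ i ∈ t, z i :=
    prod_X_sub_C_coeff_card_pred t z ht.card_pos
  calc
    _ = ∑ i ∈ t, (Lagrange.nodal t y - Lagrange.nodal t x).eval (x i) /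
          ∏ j ∈ t.erase i, (x i - x j) := by
      refine sum_congr rfl fun i hi ↦ ?_
      rw [eval_sub, Lagrange.eval_nodal, Lagrange.eval_nodal_at_node hi, sub_zero]
    _ = (Lagrange.nodal t y - Lagrange.nodal t x).coeff (#t - 1) :=
      (Lagrange.coeff_eq_sum hx degree_lt).symm
    _ = ∑ i ∈ t, (x i - y i) := by
      rw [coeff_sub, coeff_nodal, coeff_nodal, sum_sub_distrib]
      ring

theorem sum_prod_erase_sub_sub_div_sub (hx : Set.InjOn x t) (c : F) :
    ∑ i ∈ t, ∏ j ∈ t.erase i, (x i - x j - c) / (x i - x j) = #t := by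
  obtain rfl | hc := eq_or_ne c 0
  · have factors_cancel : ∀ i ∈ t, ∏ j ∈ t.erase i, (x i - x j - 0) / (x i - x j) = 1 := by
      refine fun i hi ↦ prod_eq_one fun j hj ↦ ?_
      have hij : x i ≠ x j := hx.ne hi (mem_of_mem_erase hj) (ne_of_mem_erase hj).symm
      rw [sub_zero, div_self (sub_ne_zero.2 hij)]
    rw [sum_congr rfl factors_cancel, sum_const, nsmul_one]
  · have prod_shift : ∀ i ∈ t,
        ∏ j ∈ t, (x i - (x j + c)) = -c * ∏ j ∈ t.erase i, (x i - x j - c) := by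
      intro i hi
      simp only [← mul_prod_erase t _ hi, ← sub_sub, sub_self, zero_sub]
    apply mul_left_cancel₀ (neg_ne_zero.2 hc)
    calc
      _ = ∑ i ∈ t, (∏ j ∈ t, (x i - (x j + c))) / ∏ j ∈ t.erase i, (x i - x j) := by
        rw [mul_sum]
        refine sum_congr rfl fun i hi ↦ ?_
        rw [prod_shift i hi, prod_div_distrib, mul_div_assoc]
      _ = ∑ i ∈ t, (x i - (x i + c)) := sum_prod_sub_div_prod_erase_sub hx _
      _ = -c * #t := by simp [mul_comm]

end Interpolation

theorem prod_univ_erase_eq_prod_succAbove {M : Type*} [CommMonoid M] {n : ℕ} (p : Fin (n + 1))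
    (f : Fin (n + 1) → M) : ∏ j ∈ univ.erase p, f j = ∏ j, f (p.succAbove j) := by
  rw [Fin.univ_succAbove n p, erase_cons, prod_map]
  rfl

/-- The image of `(p, e)` sends `0` to `p` and `j.succ` to `p.succAbove (e j)`. -/
theorem bijective_cycleRange_symm_mul_decomposeFin_symm (n : ℕ) :
    Function.Bijective fun q : Fin (n + 1) × Equiv.Perm (Fin n) ↦
      q.1.cycleRange⁻¹ * Equiv.Perm.decomposeFin.symm (0, q.2) := by
  refine (Fintype.bijective_iff_injective_and_card _).2
    ⟨?_, Fintype.card_congr Equiv.Perm.decomposeFin.symm⟩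
  rintro ⟨p, e⟩ ⟨p', e'⟩ h
  obtain rfl : p = p' := by simpa using DFunLike.congr_fun h 0
  simpa using h

theorem sum_perm_prod_Ioi_succ {R : Type*} [CommSemiring R] {n : ℕ}
    (g : Fin (n + 1) → Fin (n + 1) → R) :
    ∑ σ : Equiv.Perm (Fin (n + 1)), ∏ i, ∏ j ∈ Ioi i, g (σ i) (σ j) =
      ∑ p, (∏ j, g p (p.succAbove j)) * ∑ e : Equiv.Perm (Fin n),
        ∏ i, ∏ j ∈ Ioi i, g (p.succAbove (e i)) (p.succAbove (e j)) := by
  rw [← (bijective_cycleRange_symm_mul_decomposeFin_symm n).sum_comp, Fintype.sum_prod_type]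
  refine sum_congr rfl fun p _ ↦ ?_
  rw [mul_sum]
  refine sum_congr rfl fun e _ ↦ ?_
  rw [← Equiv.prod_comp e, Fin.prod_univ_succ, Fin.prod_Ioi_zero]
  simp [Fin.prod_Ioi_succ]

theorem sym_factorial_identity_general {F : Type*} [Field F] (c : F) (k : ℕ) (s : Fin k → F)
    (hs : Function.Injective s) :
    ∑ σ : Equiv.Perm (Fin k), ∏ i : Fin k, ∏ j ∈ Ioi i,
      (s (σ i) - s (σ j) - c) / (s (σ i) - s (σ j)) = (Nat.factorial k : F) := by
  induction k with
  | zero => simp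
  | succ n ih =>
    calc
      _ = ∑ p, (∏ j, (s p - s (p.succAbove j) - c) / (s p - s (p.succAbove j))) *
            (n.factorial : F) := by
        rw [sum_perm_prod_Ioi_succ fun a b ↦ (s a - s b - c) / (s a - s b)]
        refine sum_congr rfl fun p _ ↦ ?_
        exact congrArg _ (ih (s ∘ p.succAbove) (hs.comp p.succAbove_right_injective))
      _ = (∑ p, ∏ j ∈ univ.erase p, (s p - s j - c) / (s p - s j)) * (n.factorial : F) := by
        simp only [prod_univ_erase_eq_prod_succAbove, sum_mul]
      _ = ((n + 1).factorial : F) := by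
        rw [sum_prod_erase_sub_sub_div_sub hs.injOn, card_fin, Nat.factorial_succ, Nat.cast_mul]

/-- For every positive integer `k`,
`∑_{σ ∈ S_k} ∏_{1 ≤ i < j ≤ k} (s_{σ(i)} − s_{σ(j)} − 1)/(s_{σ(i)} − s_{σ(j)}) = k!`
for all pairwise distinct complex numbers `s_1, …, s_k`. -/
theorem sym_factorial_identity (k : ℕ) (hk : 0 < k) (s : Fin k → ℂ)
    (hs : Function.Injective s) :
    ∑ σ : Equiv.Perm (Fin k), ∏ i : Fin k, ∏ j ∈ Finset.Ioi i,
      (s (σ i) - s (σ j) - 1) / (s (σ i) - s (σ j)) = (Nat.factorial k : ℂ) :=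
  sym_factorial_identity_general 1 k s hs
end

section
/- Let p ≤ r be positive integers. Then G_{p,r}(y_1,…,y_p; z_1,…,z_r) = Σ_{1≤d_1<d_2<…<d_p≤r} S̄ym_{y_1,…,y_p}[ ∏_{i=1}^p ( (1/(y_i − z_{d_i})) · ∏_{d_i<j≤r} (y_i − z_j + 1)/(y_i − z_j) ) ], the sum being taken over all p-tuples d = (d_1,…,d_p) of integers with 1 ≤ d_1 < … < d_p ≤ r. -/
open scoped Classical

/-- `W_k(t_1,…,t_k) = ∏_{1≤i<j≤k} (t_i − t_j − 1)/(t_i − t_j)`. -/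
noncomputable def W {k : ℕ} (t : Fin k → ℂ) : ℂ :=
  ∏ i : Fin k, ∏ j ∈ Finset.Ioi i, (t i - t j - 1) / (t i - t j)

/-- For `i = 1,…,p`, the index `i + r − p` regarded as an index in `1,…,r`. -/
def shiftIdx (p r : ℕ) (h : p ≤ r) (i : Fin p) : Fin r :=
  ⟨(i : ℕ) + (r - p), by have := i.isLt; omega⟩

/-- `G_{p,r}(y_1,…,y_p; z_1,…,z_r) = (1/(r−p)!) · S̄ym_{z_1,…,z_r}[ ∏_{i=1}^p
( (1/(y_i − z_{i+r−p})) · ∏_{i<j≤p} (y_i − z_{j+r−p} + 1)/(y_i − z_{j+r−p}) ) ]`,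
where `S̄ym_z f = ∑_{σ ∈ S_r} (f · W_r)(z∘σ)`. -/
noncomputable def G (p r : ℕ) (h : p ≤ r) (y : Fin p → ℂ) (z : Fin r → ℂ) : ℂ :=
  (1 / (Nat.factorial (r - p) : ℂ)) *
    ∑ σ : Equiv.Perm (Fin r),
      (∏ i : Fin p, ((1 / (y i - z (σ (shiftIdx p r h i)))) *
        ∏ j ∈ Finset.Ioi i, ((y i - z (σ (shiftIdx p r h j)) + 1) /
          (y i - z (σ (shiftIdx p r h j)))))) * W (z ∘ σ)

/-!
Write `φ(a, b) = (a - b + 1) / (a - b)`. Both sides are equal to the sum over all splittings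
`Y = A ⊔ B` of the set of the `y_i` of
`(-1) ^ |B| ∏_{a ∈ A, m ∈ Z} φ(a, m) ∏_{b ∈ B, a ∈ A} φ(b, a)`, where `Z` is the set of the `z_j`.
On the right-hand side, separate the tuples with `d_p = r` from the others: this gives a recurrence
in `z_r`, which the signed sum satisfies term by term. On the left-hand side, single out the value
of `z_r` under the symmetrization: this gives a recurrence in `y_p`. The signed sum satisfies it
because, as a rational function of `y_p` tending to `0` at infinity, it is the sum of its principal
parts, and those at the other `y_i` cancel in pairs when `y_i` moves from `B` to `A`.
-/

open Finset

section PartialFractions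

variable {K : Type*} [Field K]

/-- The factor `1 + 1 / (a - b)` from which all products of the theorem are built. -/
def shiftRatio (a b : K) : K := (a - b + 1) / (a - b)

local notation "φ" => shiftRatio

theorem shiftRatio_eq_one_add {a b : K} (h : a ≠ b) : φ a b = 1 + 1 / (a - b) := by
  have := sub_ne_zero.2 h
  rw [shiftRatio, add_div, div_self this]

theorem shiftRatio_eq_one_add_neg_div {a b : K} (h : a ≠ b) : φ a b = 1 + -1 / (b - a) := by
  rw [shiftRatio_eq_one_add h, ← neg_sub a b, neg_div_neg_eq]

variable [DecidableEq K]

theorem prod_one_add_div_sub (ε : K → K) (s : Finset K) {x : K} (hx : x ∉ s) :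
    ∏ k ∈ s, (1 + ε k / (x - k)) =
      1 + ∑ k ∈ s, ε k / (x - k) * ∏ j ∈ s.erase k, (1 + ε j / (k - j)) := by
  induction s using Finset.induction_on generalizing x with
  | empty => simp
  | insert w s hw ih =>
    obtain ⟨hxw, hxs⟩ : x ≠ w ∧ x ∉ s := by simpa using hx
    have sum_split : ∑ k ∈ s, ε k / (x - k) * ∏ j ∈ (insert w s).erase k, (1 + ε j / (k - j)) =
        (1 + ε w / (x - w)) * ∑ k ∈ s, ε k / (x - k) * ∏ j ∈ s.erase k, (1 + ε j / (k - j)) -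
          ε w / (x - w) * ∑ k ∈ s, ε k / (w - k) * ∏ j ∈ s.erase k, (1 + ε j / (k - j)) := by
      rw [mul_sum, mul_sum, ← sum_sub_distrib]
      refine sum_congr rfl fun k hk => ?_
      have hkw : k ≠ w := ne_of_mem_of_not_mem hk hw
      have hxk : x - k ≠ 0 := sub_ne_zero.2 (ne_of_mem_of_not_mem hk hxs).symm
      have hwk : w - k ≠ 0 := sub_ne_zero.2 hkw.symm
      have hxw' : x - w ≠ 0 := sub_ne_zero.2 hxw
      rw [erase_insert_of_ne hkw.symm, prod_insert (by simp [hw]), ← neg_sub w k]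
      field_simp
      ring
    rw [prod_insert hw, sum_insert hw, erase_insert hw, sum_split, ih hw, ih hxs]
    ring

/-- Comparing the coefficients of `1 / x` in `prod_one_add_div_sub` as `x → ∞`. -/
theorem sum_mul_prod_one_add_div_sub (ε : K → K) (s : Finset K) :
    ∑ k ∈ s, ε k * ∏ j ∈ s.erase k, (1 + ε j / (k - j)) = ∑ k ∈ s, ε k := by
  induction s using Finset.induction_on with
  | empty => simp
  | insert w s hw ih =>
    have sum_split : ∑ k ∈ s, ε k * ∏ j ∈ (insert w s).erase k, (1 + ε j / (k - j)) =
        ∑ k ∈ s, ε k * ∏ j ∈ s.erase k, (1 + ε j / (k - j)) -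
          ε w * ∑ k ∈ s, ε k / (w - k) * ∏ j ∈ s.erase k, (1 + ε j / (k - j)) := by
      rw [mul_sum, ← sum_sub_distrib]
      refine sum_congr rfl fun k hk => ?_
      have hkw : k ≠ w := ne_of_mem_of_not_mem hk hw
      have hwk : w - k ≠ 0 := sub_ne_zero.2 hkw.symm
      rw [erase_insert_of_ne hkw.symm, prod_insert (by simp [hw]), ← neg_sub w k]
      field_simp
      ring
    rw [sum_insert hw, sum_insert hw, erase_insert hw, sum_split, ih, prod_one_add_div_sub ε s hw]
    ring

theorem prod_shiftRatio_eq_one_add_sum (s : Finset K) {x : K} (hx : x ∉ s) :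
    ∏ k ∈ s, φ x k = 1 + ∑ k ∈ s, 1 / (x - k) * ∏ j ∈ s.erase k, φ k j := by
  have hφ {k : K} (t : Finset K) (hk : k ∉ t) : ∏ j ∈ t, φ k j = ∏ j ∈ t, (1 + 1 / (k - j)) :=
    prod_congr rfl fun j hj => shiftRatio_eq_one_add (ne_of_mem_of_not_mem hj hk).symm
  rw [hφ s hx, prod_one_add_div_sub (fun _ => 1) s hx]
  simp only [hφ _ (notMem_erase _ s)]

theorem sum_prod_erase_shiftRatio (s : Finset K) :
    ∑ k ∈ s, ∏ j ∈ s.erase k, φ k j = #s := by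
  have := sum_mul_prod_one_add_div_sub (fun _ => (1 : K)) s
  simp only [one_mul, sum_const, nsmul_one] at this
  rw [← this]
  exact sum_congr rfl fun k _ => prod_congr rfl fun j hj =>
    shiftRatio_eq_one_add (ne_of_mem_erase hj).symm

theorem prod_shiftRatio_mul_prod_shiftRatio {B Z : Finset K} {y : K} (hBZ : Disjoint B Z)
    (hyB : y ∉ B) (hyZ : y ∉ Z) :
    (∏ b ∈ B, φ b y) * ∏ m ∈ Z, φ y m =
      1 + ∑ m ∈ Z, 1 / (y - m) * ((∏ b ∈ B, φ b m) * ∏ l ∈ Z.erase m, φ m l) -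
        ∑ b ∈ B, 1 / (y - b) * ((∏ c ∈ B.erase b, φ c b) * ∏ m ∈ Z, φ b m) := by
  set ε : K → K := fun k => if k ∈ B then -1 else 1 with hε
  have prod_union_eq {x : K} {B' Z' : Finset K} (hB' : B' ⊆ B) (hZ' : Z' ⊆ Z) (hxB : x ∉ B')
      (hxZ : x ∉ Z') :
      ∏ k ∈ B' ∪ Z', (1 + ε k / (x - k)) = (∏ b ∈ B', φ b x) * ∏ m ∈ Z', φ x m := by
    rw [prod_union (hBZ.mono hB' hZ')]
    congr 1 <;> refine prod_congr rfl fun k hk => ?_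
    · rw [shiftRatio_eq_one_add_neg_div (ne_of_mem_of_not_mem hk hxB), hε]
      simp only [if_pos (hB' hk)]
    · rw [shiftRatio_eq_one_add (ne_of_mem_of_not_mem hk hxZ).symm, hε]
      simp only [if_neg (disjoint_right.1 hBZ (hZ' hk))]
  rw [← prod_union_eq subset_rfl subset_rfl hyB hyZ,
    prod_one_add_div_sub ε _ (by simp [hyB, hyZ]), sum_union hBZ, add_sub_assoc, sub_eq_neg_add,
    ← sum_neg_distrib]
  congr 2 <;> refine sum_congr rfl fun k hk => ?_
  · have hkZ : k ∉ Z := disjoint_left.1 hBZ hk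
    rw [erase_union_distrib, erase_eq_of_notMem hkZ,
      prod_union_eq (erase_subset k B) subset_rfl (notMem_erase k B) hkZ, hε]
    simp only [if_pos hk]
    ring
  · have hkB : k ∉ B := disjoint_right.1 hBZ hk
    rw [erase_union_distrib, erase_eq_of_notMem hkB,
      prod_union_eq subset_rfl (erase_subset k Z) hkB (notMem_erase k Z), hε]
    simp only [if_neg hkB]

theorem prod_shiftRatio_left_eq_one_add_sum (s : Finset K) {w : K} (hw : w ∉ s) :
    ∏ k ∈ s, φ k w = 1 + ∑ k ∈ s,
      1 / (k - w) * ((∏ j ∈ s.erase k, φ j w) * ∏ j ∈ s.erase k, φ k j) := by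
  induction s using Finset.induction_on with
  | empty => simp
  | insert b s hb ih =>
    obtain ⟨hwb, hws⟩ : w ≠ b ∧ w ∉ s := by simpa using hw
    have hbw : b - w ≠ 0 := sub_ne_zero.2 hwb.symm
    have sum_split : ∑ k ∈ s, 1 / (k - w) * ((∏ j ∈ (insert b s).erase k, φ j w) *
          ∏ j ∈ (insert b s).erase k, φ k j) =
        ∑ k ∈ s, 1 / (k - w) * ((∏ j ∈ s.erase k, φ j w) * ∏ j ∈ s.erase k, φ k j) -
          1 / (b - w) * (∏ k ∈ s, φ k w) *
            ∑ k ∈ s, 1 / (b - k) * ∏ j ∈ s.erase k, φ k j := by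
      rw [mul_sum, ← sum_sub_distrib]
      refine sum_congr rfl fun k hk => ?_
      have hkb : k ≠ b := ne_of_mem_of_not_mem hk hb
      have hbk : b - k ≠ 0 := sub_ne_zero.2 hkb.symm
      have hkw : k - w ≠ 0 := sub_ne_zero.2 (ne_of_mem_of_not_mem hk hws)
      have key : 1 / (k - w) * (φ b w * φ k b) =
          1 / (k - w) - 1 / (b - w) * φ k w * (1 / (b - k)) := by
        rw [shiftRatio, shiftRatio, shiftRatio, ← neg_sub b k]
        field_simp
        ring
      rw [erase_insert_of_ne hkb.symm, prod_insert (by simp [hb]), prod_insert (by simp [hb]),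
        ← mul_prod_erase s _ hk]
      linear_combination (∏ j ∈ s.erase k, φ j w) * (∏ j ∈ s.erase k, φ k j) * key
    rw [prod_insert hb, sum_insert hb, erase_insert hb, sum_split,
      prod_shiftRatio_eq_one_add_sum s hb, shiftRatio_eq_one_add hwb.symm]
    linear_combination ih hws

end PartialFractions

section SignedSubsetSum

variable {K : Type*} [Field K] [DecidableEq K]

local notation "φ" => shiftRatio

/-- The summand of `signedSubsetSum (A ∪ B) Z` indexed by the splitting into `A` and `B`. -/
def signedTerm (A B Z : Finset K) : K :=
  (-1) ^ #B * (∏ a ∈ A, ∏ m ∈ Z, φ a m) * ∏ b ∈ B, ∏ a ∈ A, φ b a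

/-- The closed form of both sides of the theorem; it is visibly symmetric in the elements of `Y`
and in those of `Z`. -/
def signedSubsetSum (Y Z : Finset K) : K :=
  ∑ A ∈ Y.powerset, signedTerm A (Y \ A) Z

theorem signedTerm_insert_left {k : K} {A B : Finset K} (Z : Finset K) (hk : k ∉ A) :
    signedTerm (insert k A) B Z =
      (∏ b ∈ B, φ b k) * (∏ m ∈ Z, φ k m) * signedTerm A B Z := by
  simp only [signedTerm, prod_insert hk, prod_mul_distrib]
  ring

theorem signedTerm_insert_middle {k : K} {A B : Finset K} (Z : Finset K) (hk : k ∉ B) :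
    signedTerm A (insert k B) Z = -(∏ a ∈ A, φ k a) * signedTerm A B Z := by
  simp only [signedTerm, prod_insert hk, card_insert_of_notMem hk]
  ring

theorem signedTerm_insert_right {w : K} (A B : Finset K) {Z : Finset K} (hw : w ∉ Z) :
    signedTerm A B (insert w Z) = (∏ a ∈ A, φ a w) * signedTerm A B Z := by
  simp only [signedTerm, prod_insert hw, prod_mul_distrib]
  ring

@[simp]
theorem signedSubsetSum_empty_left (Z : Finset K) : signedSubsetSum ∅ Z = 1 := by
  simp [signedSubsetSum, signedTerm]

theorem sum_signedTerm_erase {A B : Finset K} (Z : Finset K) {w : K} (hAB : Disjoint A B)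
    (hw : w ∉ B) :
    ∑ k ∈ B, 1 / (k - w) * (∏ j ∈ (A ∪ B).erase k, φ j w) * (∏ j ∈ (A ∪ B).erase k, φ k j) *
        signedTerm A (B.erase k) Z =
      (∏ a ∈ A, φ a w) * (1 - ∏ b ∈ B, φ b w) * signedTerm A B Z := by
  have summand_eq : ∀ k ∈ B, 1 / (k - w) * (∏ j ∈ (A ∪ B).erase k, φ j w) *
        (∏ j ∈ (A ∪ B).erase k, φ k j) * signedTerm A (B.erase k) Z =
      -((∏ a ∈ A, φ a w) * signedTerm A B Z) *
        (1 / (k - w) * ((∏ j ∈ B.erase k, φ j w) * ∏ j ∈ B.erase k, φ k j)) := by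
    intro k hk
    have erase_union : (A ∪ B).erase k = A ∪ B.erase k := by
      rw [erase_union_distrib, erase_eq_of_notMem (disjoint_right.1 hAB hk)]
    have erase_term : signedTerm A B Z = -(∏ a ∈ A, φ k a) * signedTerm A (B.erase k) Z := by
      rw [← signedTerm_insert_middle Z (notMem_erase k B), insert_erase hk]
    have hAB' : Disjoint A (B.erase k) := hAB.mono_right (erase_subset k B)
    rw [erase_union, prod_union hAB', prod_union hAB', erase_term]
    ring
  rw [sum_congr rfl summand_eq, ← mul_sum, prod_shiftRatio_left_eq_one_add_sum B hw]
  ring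

theorem signedSubsetSum_insert_right {Y Z : Finset K} {w : K} (hwY : w ∉ Y) (hwZ : w ∉ Z) :
    signedSubsetSum Y (insert w Z) = (∏ k ∈ Y, φ k w) * signedSubsetSum Y Z +
      ∑ k ∈ Y, 1 / (k - w) * (∏ j ∈ Y.erase k, φ j w) * (∏ j ∈ Y.erase k, φ k j) *
        signedSubsetSum (Y.erase k) Z := by
  have sum_swap : ∑ k ∈ Y, 1 / (k - w) * (∏ j ∈ Y.erase k, φ j w) * (∏ j ∈ Y.erase k, φ k j) *
        signedSubsetSum (Y.erase k) Z =
      ∑ A ∈ Y.powerset, ∑ k ∈ Y \ A, 1 / (k - w) * (∏ j ∈ Y.erase k, φ j w) *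
        (∏ j ∈ Y.erase k, φ k j) * signedTerm A ((Y \ A).erase k) Z := by
    simp only [signedSubsetSum, mul_sum, erase_sdiff_comm]
    refine sum_comm' fun k A => ?_
    simp only [mem_powerset, subset_erase, mem_sdiff]
    tauto
  rw [sum_swap, signedSubsetSum, signedSubsetSum, mul_sum, ← sum_add_distrib]
  refine sum_congr rfl fun A hA => ?_
  have hAY : A ⊆ Y := mem_powerset.1 hA
  have hwB : w ∉ Y \ A := fun h => hwY (mem_sdiff.1 h).1
  have inner_sum := sum_signedTerm_erase Z disjoint_sdiff hwB
  rw [union_sdiff_of_subset hAY] at inner_sum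
  rw [signedTerm_insert_right A _ hwZ, inner_sum, ← prod_sdiff hAY]
  ring

theorem sum_powerset_sum_sdiff_insert {α M : Type*} [DecidableEq α] [AddCommMonoid M]
    (s : Finset α) (f : Finset α → α → M) :
    ∑ A ∈ s.powerset, ∑ b ∈ s \ A, f (insert b A) b = ∑ A ∈ s.powerset, ∑ a ∈ A, f A a := by
  rw [sum_sigma', sum_sigma']
  refine sum_bij' (fun x _ => ⟨insert x.2 x.1, x.2⟩) (fun x _ => ⟨x.1.erase x.2, x.2⟩)
    ?_ ?_ ?_ ?_ fun _ _ => rfl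
  · rintro ⟨A, b⟩ h
    simp only [mem_sigma, mem_powerset, mem_sdiff] at h ⊢
    exact ⟨insert_subset h.2.1 h.1, mem_insert_self b A⟩
  · rintro ⟨A, a⟩ h
    simp only [mem_sigma, mem_powerset, mem_sdiff] at h ⊢
    exact ⟨(erase_subset a A).trans h.1, h.1 h.2, notMem_erase a A⟩
  · rintro ⟨A, b⟩ h
    simp only [mem_sigma, mem_sdiff] at h
    simp only [erase_insert h.2.2]
  · rintro ⟨A, a⟩ h
    simp only [mem_sigma] at h
    simp only [insert_erase h.2]

/-- Moving `b` from `Y \ A` to `A` flips the sign of the term, so the two residues at `y = b`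
cancel. -/
theorem sum_powerset_signedTerm_mul_residue_eq_zero (Y Z : Finset K) (y : K) :
    ∑ A ∈ Y.powerset, signedTerm A (Y \ A) Z *
      (∑ b ∈ Y \ A, 1 / (y - b) * ((∏ c ∈ (Y \ A).erase b, φ c b) * ∏ m ∈ Z, φ b m) +
        ∑ a ∈ A, 1 / (y - a) * ∏ c ∈ A.erase a, φ a c) = 0 := by
  have move_term : ∀ A ∈ Y.powerset, ∀ b ∈ Y \ A,
      signedTerm A (Y \ A) Z *
          (1 / (y - b) * ((∏ c ∈ (Y \ A).erase b, φ c b) * ∏ m ∈ Z, φ b m)) =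
        -(signedTerm (insert b A) (Y \ insert b A) Z *
          (1 / (y - b) * ∏ c ∈ (insert b A).erase b, φ b c)) := by
    intro A _ b hb
    have hbA : b ∉ A := (mem_sdiff.1 hb).2
    have erase_term : signedTerm A (Y \ A) Z =
        -(∏ a ∈ A, φ b a) * signedTerm A ((Y \ A).erase b) Z := by
      rw [← signedTerm_insert_middle Z (notMem_erase b _), insert_erase hb]
    rw [erase_insert hbA, sdiff_insert, signedTerm_insert_left Z hbA, erase_term]
    ring
  simp only [mul_add, mul_sum, sum_add_distrib]
  rw [sum_congr rfl fun A hA => sum_congr rfl (move_term A hA),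
    sum_powerset_sum_sdiff_insert Y fun A b =>
      -(signedTerm A (Y \ A) Z * (1 / (y - b) * ∏ c ∈ A.erase b, φ b c))]
  simp only [sum_neg_distrib, neg_add_cancel]

theorem signedSubsetSum_insert_left {Y Z : Finset K} {y : K} (hyY : y ∉ Y) (hyZ : y ∉ Z)
    (hYZ : Disjoint Y Z) :
    signedSubsetSum (insert y Y) Z = ∑ m ∈ Z, 1 / (y - m) * (∏ k ∈ Y, φ k m) *
      (∏ l ∈ Z.erase m, φ m l) * signedSubsetSum Y (Z.erase m) := by
  have left_eq : signedSubsetSum (insert y Y) Z = ∑ A ∈ Y.powerset, signedTerm A (Y \ A) Z *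
      ((∏ b ∈ Y \ A, φ b y) * (∏ m ∈ Z, φ y m) - ∏ a ∈ A, φ y a) := by
    rw [signedSubsetSum, sum_powerset_insert hyY, ← sum_add_distrib]
    refine sum_congr rfl fun A hA => ?_
    have hyA : y ∉ A := fun h => hyY (mem_powerset.1 hA h)
    rw [insert_sdiff_of_notMem _ hyA, insert_sdiff_insert, sdiff_insert_of_notMem hyY,
      signedTerm_insert_middle Z (by simp [hyY]), signedTerm_insert_left Z hyA]
    ring
  have right_eq : ∑ m ∈ Z, 1 / (y - m) * (∏ k ∈ Y, φ k m) * (∏ l ∈ Z.erase m, φ m l) *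
        signedSubsetSum Y (Z.erase m) =
      ∑ A ∈ Y.powerset, signedTerm A (Y \ A) Z *
        ∑ m ∈ Z, 1 / (y - m) * ((∏ b ∈ Y \ A, φ b m) * ∏ l ∈ Z.erase m, φ m l) := by
    simp only [signedSubsetSum, mul_sum]
    rw [sum_comm]
    refine sum_congr rfl fun A hA => sum_congr rfl fun m hm => ?_
    have erase_term : signedTerm A (Y \ A) Z =
        (∏ a ∈ A, φ a m) * signedTerm A (Y \ A) (Z.erase m) := by
      rw [← signedTerm_insert_right A _ (notMem_erase m Z), insert_erase hm]
    rw [erase_term, ← prod_sdiff (mem_powerset.1 hA)]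
    ring
  rw [left_eq, right_eq, ← sub_eq_zero, ← sum_sub_distrib, ← neg_eq_zero, ← sum_neg_distrib,
    ← sum_powerset_signedTerm_mul_residue_eq_zero Y Z y]
  refine sum_congr rfl fun A hA => ?_
  have hyA : y ∉ A := fun h => hyY (mem_powerset.1 hA h)
  rw [prod_shiftRatio_mul_prod_shiftRatio (hYZ.mono_left sdiff_subset) (by simp [hyY]) hyZ,
    prod_shiftRatio_eq_one_add_sum A hyA]
  ring

theorem signedSubsetSum_empty_right {Y : Finset K} (hY : Y.Nonempty) :
    signedSubsetSum Y ∅ = 0 := by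
  obtain ⟨y, hy⟩ := hY
  rw [← insert_erase hy, signedSubsetSum_insert_left (notMem_erase y Y) (notMem_empty y)
    (disjoint_empty_right _), sum_empty]

end SignedSubsetSum

section Symmetrization

local notation "φ" => shiftRatio

theorem sum_perm_comp_succ {α M : Type*} [AddCommMonoid M] {n : ℕ} (t : Fin (n + 1) → α)
    (F : (Fin (n + 1) → α) → M) :
    ∑ σ : Equiv.Perm (Fin (n + 1)), F (t ∘ σ) =
      ∑ m, ∑ σ : Equiv.Perm (Fin n),
        F (Fin.snoc (α := fun _ => α) (t ∘ m.succAbove ∘ σ) (t m)) := by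
  let extend (x : Fin (n + 1) × Equiv.Perm (Fin n)) : Equiv.Perm (Fin (n + 1)) :=
    finSuccEquivLast.trans (x.2.optionCongr.trans (finSuccEquiv' x.1).symm)
  have extend_last (x) : extend x (Fin.last n) = x.1 := by simp [extend]
  have extend_castSucc (x) (i : Fin n) : extend x i.castSucc = x.1.succAbove (x.2 i) := by
    simp [extend]
  have extend_bijective : Function.Bijective extend := by
    refine (Fintype.bijective_iff_injective_and_card _).2 ⟨?_, ?_⟩
    · rintro ⟨m, σ⟩ ⟨m', σ'⟩ h
      obtain rfl : m = m' := by
        simpa only [extend_last] using DFunLike.congr_fun h (Fin.last n)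
      refine Prod.ext rfl (Equiv.ext fun i => Fin.succAbove_right_injective (p := m) ?_)
      rw [← extend_castSucc (m, σ), h, extend_castSucc]
    · simp [Fintype.card_perm, Nat.factorial_succ]
  rw [← Fintype.sum_prod_type']
  refine (extend_bijective.sum_comp fun σ => F (t ∘ σ)).symm.trans
    (sum_congr rfl fun x _ => congrArg F (funext fun i => ?_))
  refine Fin.lastCases ?_ (fun i => ?_) i
  · simp [extend_last]
  · simp [extend_castSucc]

theorem prod_Ioi_castSucc {M : Type*} [CommMonoid M] {n : ℕ} (i : Fin n) (f : Fin (n + 1) → M) :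
    ∏ j ∈ Ioi i.castSucc, f j = (∏ j ∈ Ioi i, f j.castSucc) * f (Fin.last n) := by
  have Ioi_eq : Ioi i.castSucc = insert (Fin.last n) ((Ioi i).map Fin.castSuccEmb) := by
    rw [Fin.map_castSuccEmb_Ioi, Ioo_insert_right (Fin.castSucc_lt_last i), ← Fin.top_eq_last,
      Ioc_top]
  rw [Ioi_eq, prod_insert (by simp), prod_map, mul_comm]
  rfl

theorem prod_Ioi_last {M : Type*} [CommMonoid M] {n : ℕ} (f : Fin (n + 1) → M) :
    ∏ j ∈ Ioi (Fin.last n), f j = 1 := by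
  rw [← Fin.top_eq_last, Ioi_top, prod_empty]

theorem W_snoc {n : ℕ} (t : Fin n → ℂ) (a : ℂ) :
    W (Fin.snoc (α := fun _ => ℂ) t a) = (∏ i, φ a (t i)) * W t := by
  have factor_eq (b : ℂ) : (b - a - 1) / (b - a) = φ a b := by
    rw [shiftRatio, ← neg_div_neg_eq]
    congr 1 <;> ring
  rw [W, Fin.prod_univ_castSucc, prod_Ioi_last, mul_one, W, ← prod_mul_distrib]
  refine prod_congr rfl fun i _ => ?_
  simp only [prod_Ioi_castSucc, Fin.snoc_castSucc, Fin.snoc_last, factor_eq, mul_comm]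

/-- The weighted symmetrization `S̄ym f` as a function of the variables `t`. -/
noncomputable def weightedSym {n : ℕ} (f : (Fin n → ℂ) → ℂ) (t : Fin n → ℂ) : ℂ :=
  ∑ σ : Equiv.Perm (Fin n), f (t ∘ σ) * W (t ∘ σ)

theorem weightedSym_succ {n : ℕ} (f : (Fin (n + 1) → ℂ) → ℂ) (t : Fin (n + 1) → ℂ) :
    weightedSym f t = ∑ m, (∏ l, φ (t m) (t (m.succAbove l))) *
      weightedSym (fun s => f (Fin.snoc (α := fun _ => ℂ) s (t m))) (t ∘ m.succAbove) := by
  rw [weightedSym, sum_perm_comp_succ t fun s => f s * W s]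
  refine sum_congr rfl fun m _ => ?_
  rw [weightedSym, mul_sum]
  refine sum_congr rfl fun σ _ => ?_
  rw [W_snoc, ← Equiv.prod_comp σ fun l => φ (t m) (t (m.succAbove l))]
  simp only [Function.comp_apply, Function.comp_assoc]
  ring

theorem weightedSym_const_mul {n : ℕ} (c : ℂ) (f : (Fin n → ℂ) → ℂ) (t : Fin n → ℂ) :
    weightedSym (fun s => c * f s) t = c * weightedSym f t := by
  simp only [weightedSym, mul_sum, mul_assoc]

theorem weightedSym_prod_mul {n : ℕ} (g : ℂ → ℂ) (f : (Fin n → ℂ) → ℂ) (t : Fin n → ℂ) :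
    weightedSym (fun s => (∏ i, g (s i)) * f s) t = (∏ i, g (t i)) * weightedSym f t := by
  simp only [weightedSym, mul_sum, mul_assoc, Function.comp_apply]
  exact sum_congr rfl fun σ _ => by rw [Equiv.prod_comp σ fun i => g (t i)]

theorem erase_image_univ {α : Type*} [DecidableEq α] {n : ℕ} {t : Fin (n + 1) → α}
    (ht : Function.Injective t) (m : Fin (n + 1)) :
    (univ.image t).erase (t m) = univ.image (t ∘ m.succAbove) := by
  rw [← image_erase ht, ← image_image, Fin.image_succAbove_univ, compl_singleton]

theorem weightedSym_one {n : ℕ} {t : Fin n → ℂ} (ht : Function.Injective t) :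
    weightedSym (fun _ => 1) t = (n.factorial : ℂ) := by
  induction n with
  | zero => simp [weightedSym, W]
  | succ n ih =>
    have h := sum_prod_erase_shiftRatio (univ.image t)
    rw [sum_image ht.injOn, card_image_of_injective _ ht, card_fin] at h
    rw [weightedSym_succ, Nat.factorial_succ, Nat.cast_mul, ← h, sum_mul]
    refine sum_congr rfl fun m _ => ?_
    have hm : Function.Injective (t ∘ m.succAbove) := ht.comp Fin.succAbove_right_injective
    rw [ih hm, erase_image_univ ht, prod_image hm.injOn]
    rfl

end Symmetrization

section BothSides

local notation "φ" => shiftRatio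

/-- The function of `z_1, …, z_r` symmetrized in `G p r h y`. -/
noncomputable def gIntegrand (p r : ℕ) (h : p ≤ r) (y : Fin p → ℂ) (t : Fin r → ℂ) : ℂ :=
  ∏ i, (1 / (y i - t (shiftIdx p r h i)) * ∏ j ∈ Ioi i, φ (y i) (t (shiftIdx p r h j)))

theorem G_eq_weightedSym (p r : ℕ) (h : p ≤ r) (y : Fin p → ℂ) (z : Fin r → ℂ) :
    G p r h y z = 1 / ((r - p).factorial : ℂ) * weightedSym (gIntegrand p r h y) z :=
  rfl

theorem gIntegrand_snoc {p r : ℕ} (h : p ≤ r) (y : Fin (p + 1) → ℂ) (t : Fin r → ℂ) (a : ℂ) :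
    gIntegrand (p + 1) (r + 1) (Nat.succ_le_succ h) y (Fin.snoc (α := fun _ => ℂ) t a) =
      1 / (y (Fin.last p) - a) * (∏ i : Fin p, φ (y i.castSucc) a) *
        gIntegrand p r h (y ∘ Fin.castSucc) t := by
  have shiftIdx_last :
      shiftIdx (p + 1) (r + 1) (Nat.succ_le_succ h) (Fin.last p) = Fin.last r := by
    ext
    simp only [shiftIdx, Fin.val_last]
    omega
  have shiftIdx_castSucc (i : Fin p) : shiftIdx (p + 1) (r + 1) (Nat.succ_le_succ h) i.castSucc =
      (shiftIdx p r h i).castSucc := by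
    ext
    simp [shiftIdx]
  simp only [gIntegrand, Fin.prod_univ_castSucc, prod_Ioi_last, prod_Ioi_castSucc, shiftIdx_last,
    shiftIdx_castSucc, Fin.snoc_last, Fin.snoc_castSucc, prod_mul_distrib, Function.comp_apply]
  ring

theorem G_succ {p r : ℕ} (h : p ≤ r) (y : Fin (p + 1) → ℂ) (z : Fin (r + 1) → ℂ) :
    G (p + 1) (r + 1) (Nat.succ_le_succ h) y z =
      ∑ m, 1 / (y (Fin.last p) - z m) * (∏ i : Fin p, φ (y i.castSucc) (z m)) *
        (∏ l, φ (z m) (z (m.succAbove l))) * G p r h (y ∘ Fin.castSucc) (z ∘ m.succAbove) := by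
  simp only [G_eq_weightedSym, weightedSym_succ, gIntegrand_snoc h, weightedSym_const_mul,
    Nat.add_sub_add_right, mul_sum]
  exact sum_congr rfl fun m _ => by ring

theorem image_univ_eq_insert_last {α : Type*} [DecidableEq α] {n : ℕ} (t : Fin (n + 1) → α) :
    univ.image t = insert (t (Fin.last n)) (univ.image (t ∘ Fin.castSucc)) := by
  ext x
  simp [Fin.exists_fin_succ', or_comm, eq_comm]

theorem G_eq_signedSubsetSum {p r : ℕ} (h : p ≤ r) {y : Fin p → ℂ} {z : Fin r → ℂ}
    (hy : Function.Injective y) (hz : Function.Injective z) (hyz : ∀ i j, y i ≠ z j) :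
    G p r h y z = signedSubsetSum (univ.image y) (univ.image z) := by
  induction p generalizing r with
  | zero =>
    have gIntegrand_eq : gIntegrand 0 r h y = fun _ => 1 := by
      ext
      simp [gIntegrand]
    rw [G_eq_weightedSym, gIntegrand_eq, weightedSym_one hz, univ_eq_empty, image_empty,
      signedSubsetSum_empty_left, Nat.sub_zero, one_div_mul_cancel]
    exact Nat.cast_ne_zero.2 r.factorial_ne_zero
  | succ p ih =>
    obtain ⟨r, rfl⟩ := Nat.exists_eq_succ_of_ne_zero (Nat.ne_zero_of_lt h)
    have hy' : Function.Injective (y ∘ Fin.castSucc) := hy.comp (Fin.castSucc_injective p)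
    have last_notMem : y (Fin.last p) ∉ univ.image (y ∘ Fin.castSucc) := by
      simp [hy.eq_iff, Fin.castSucc_ne_last]
    have last_notMem' : y (Fin.last p) ∉ univ.image z := by
      simpa using fun j => (hyz (Fin.last p) j).symm
    have images_disjoint : Disjoint (univ.image (y ∘ Fin.castSucc)) (univ.image z) := by
      simpa [disjoint_left] using fun i j => (hyz (Fin.castSucc i) j).symm
    rw [G_succ (Nat.le_of_succ_le_succ h), image_univ_eq_insert_last y,
      signedSubsetSum_insert_left last_notMem last_notMem' images_disjoint, sum_image hz.injOn]
    refine sum_congr rfl fun m _ => ?_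
    have hm : Function.Injective (z ∘ m.succAbove) := hz.comp Fin.succAbove_right_injective
    rw [erase_image_univ hz, prod_image hy'.injOn, prod_image hm.injOn,
      ih _ hy' hm fun i j => hyz _ _]
    rfl

/-- The function of `y_1, …, y_p` symmetrized in the summand of the tuple `d`. -/
noncomputable def tupleIntegrand {p r : ℕ} (d : Fin p → Fin r) (z : Fin r → ℂ)
    (t : Fin p → ℂ) : ℂ :=
  ∏ i, (1 / (t i - z (d i)) * ∏ j ∈ Ioi (d i), φ (t i) (z j))

theorem tupleIntegrand_castSucc_comp {p r : ℕ} (d : Fin p → Fin r) (z : Fin (r + 1) → ℂ)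
    (t : Fin p → ℂ) :
    tupleIntegrand (Fin.castSucc ∘ d) z t =
      (∏ i, φ (t i) (z (Fin.last r))) * tupleIntegrand d (z ∘ Fin.castSucc) t := by
  simp only [tupleIntegrand, prod_Ioi_castSucc, prod_mul_distrib, Function.comp_apply]
  ring

theorem tupleIntegrand_snoc_last {p r : ℕ} (d : Fin p → Fin r) (z : Fin (r + 1) → ℂ)
    (s : Fin p → ℂ) (a : ℂ) :
    tupleIntegrand (Fin.snoc (α := fun _ => Fin (r + 1)) (Fin.castSucc ∘ d) (Fin.last r)) z
        (Fin.snoc (α := fun _ => ℂ) s a) =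
      1 / (a - z (Fin.last r)) *
        ((∏ i, φ (s i) (z (Fin.last r))) * tupleIntegrand d (z ∘ Fin.castSucc) s) := by
  rw [← tupleIntegrand_castSucc_comp]
  simp only [tupleIntegrand, Fin.prod_univ_castSucc, Fin.snoc_castSucc, Fin.snoc_last,
    prod_Ioi_last]
  ring

theorem exists_castSucc_comp_eq {α : Type*} [Preorder α] {r : ℕ} {d : α → Fin (r + 1)}
    (hd : StrictMono d) (hlast : ∀ i, d i ≠ Fin.last r) :
    ∃ d' : α → Fin r, StrictMono d' ∧ Fin.castSucc ∘ d' = d :=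
  ⟨fun i => (d i).castPred (hlast i), fun _ _ hij => Fin.castPred_lt_castPred_iff.2 (hd hij),
    funext fun i => Fin.castSucc_castPred (d i) (hlast i)⟩

theorem strictMono_snoc_last {p r : ℕ} {d : Fin p → Fin r} (hd : StrictMono d) :
    StrictMono (Fin.snoc (α := fun _ => Fin (r + 1)) (Fin.castSucc ∘ d) (Fin.last r)) := by
  intro i j hij
  obtain ⟨i, rfl⟩ := Fin.exists_castSucc_eq.2 (Fin.ne_last_of_lt hij)
  refine Fin.lastCases (fun _ => ?_) (fun j hij => ?_) j hij
  · simp [Fin.castSucc_lt_last]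
  · simpa using hd (Fin.castSucc_lt_castSucc_iff.1 hij)

theorem filter_strictMono_succ (p r : ℕ) :
    ({d | StrictMono d} : Finset (Fin (p + 1) → Fin (r + 1))) =
      ({d | StrictMono d} : Finset (Fin (p + 1) → Fin r)).image (Fin.castSucc ∘ ·) ∪
        ({d | StrictMono d} : Finset (Fin p → Fin r)).image fun d =>
          Fin.snoc (α := fun _ => Fin (r + 1)) (Fin.castSucc ∘ d) (Fin.last r) := by
  ext d
  simp only [mem_union, mem_image, mem_filter_univ]
  constructor
  · intro hd
    have init_ne_last (i : Fin p) : d i.castSucc ≠ Fin.last r :=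
      ((hd (Fin.castSucc_lt_last i)).trans_le (Fin.le_last _)).ne
    by_cases hlast : d (Fin.last p) = Fin.last r
    · obtain ⟨d', hd', h⟩ := exists_castSucc_comp_eq (hd.comp Fin.strictMono_castSucc) init_ne_last
      refine .inr ⟨d', hd', ?_⟩
      rw [h, ← hlast]
      exact Fin.snoc_init_self d
    · exact .inl (exists_castSucc_comp_eq hd (Fin.lastCases hlast init_ne_last))
  · rintro (⟨d, hd, rfl⟩ | ⟨d, hd, rfl⟩)
    · exact Fin.strictMono_castSucc.comp hd
    · exact strictMono_snoc_last hd

theorem sum_strictMono_succ {M : Type*} [AddCommMonoid M] (p r : ℕ)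
    (f : (Fin (p + 1) → Fin (r + 1)) → M) :
    ∑ d with StrictMono d, f d =
      ∑ d : Fin (p + 1) → Fin r with StrictMono d, f (Fin.castSucc ∘ d) +
        ∑ d : Fin p → Fin r with StrictMono d,
          f (Fin.snoc (α := fun _ => Fin (r + 1)) (Fin.castSucc ∘ d) (Fin.last r)) := by
  have images_disjoint : Disjoint
      (({d | StrictMono d} : Finset (Fin (p + 1) → Fin r)).image (Fin.castSucc ∘ ·))
      (({d | StrictMono d} : Finset (Fin p → Fin r)).image fun d =>
        Fin.snoc (α := fun _ => Fin (r + 1)) (Fin.castSucc ∘ d) (Fin.last r)) := by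
    simp only [disjoint_left, mem_image, not_exists, not_and]
    rintro _ ⟨d, _, rfl⟩ d' _ h
    have := congrFun h (Fin.last p)
    rw [Fin.snoc_last] at this
    exact Fin.castSucc_ne_last _ this.symm
  rw [filter_strictMono_succ, sum_union images_disjoint,
    sum_image ((Fin.castSucc_injective r).comp_left.injOn), sum_image]
  intro d _ d' _ h
  exact (Fin.castSucc_injective r).comp_left (Fin.snoc_injective2 h).1

/-- The right-hand side of the theorem. -/
noncomputable def tupleSum (p r : ℕ) (y : Fin p → ℂ) (z : Fin r → ℂ) : ℂ :=
  ∑ d : Fin p → Fin r with StrictMono d, weightedSym (tupleIntegrand d z) y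

theorem tupleSum_succ {p r : ℕ} (y : Fin (p + 1) → ℂ) (z : Fin (r + 1) → ℂ) :
    tupleSum (p + 1) (r + 1) y z =
      (∏ i, φ (y i) (z (Fin.last r))) * tupleSum (p + 1) r y (z ∘ Fin.castSucc) +
        ∑ k, 1 / (y k - z (Fin.last r)) * (∏ i, φ (y (k.succAbove i)) (z (Fin.last r))) *
          (∏ i, φ (y k) (y (k.succAbove i))) *
            tupleSum p r (y ∘ k.succAbove) (z ∘ Fin.castSucc) := by
  rw [tupleSum, sum_strictMono_succ]
  congr 1
  · have integrand_eq (d : Fin (p + 1) → Fin r) : tupleIntegrand (Fin.castSucc ∘ d) z =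
        fun t => (∏ i, φ (t i) (z (Fin.last r))) * tupleIntegrand d (z ∘ Fin.castSucc) t :=
      funext (tupleIntegrand_castSucc_comp d z)
    simp only [integrand_eq, weightedSym_prod_mul (φ · (z (Fin.last r))), tupleSum, mul_sum]
  · simp only [weightedSym_succ, tupleIntegrand_snoc_last, weightedSym_const_mul,
      weightedSym_prod_mul (φ · (z (Fin.last r))), tupleSum, mul_sum, Function.comp_apply]
    rw [sum_comm]
    exact sum_congr rfl fun k _ => sum_congr rfl fun d _ => by ring

theorem tupleSum_zero_left (r : ℕ) (y : Fin 0 → ℂ) (z : Fin r → ℂ) : tupleSum 0 r y z = 1 := by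
  simp [tupleSum, weightedSym, tupleIntegrand, W, Subsingleton.strictMono]

theorem tupleSum_eq_signedSubsetSum {p r : ℕ} {y : Fin p → ℂ} {z : Fin r → ℂ}
    (hy : Function.Injective y) (hz : Function.Injective z) (hyz : ∀ i j, y i ≠ z j) :
    tupleSum p r y z = signedSubsetSum (univ.image y) (univ.image z) := by
  induction r generalizing p with
  | zero =>
    cases p with
    | zero => simp [tupleSum_zero_left]
    | succ p =>
      rw [univ_eq_empty (α := Fin 0), image_empty,
        signedSubsetSum_empty_right (univ_nonempty.image y), tupleSum, univ_eq_empty, filter_empty,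
        sum_empty]
  | succ r ih =>
    cases p with
    | zero => simp [tupleSum_zero_left]
    | succ p =>
      have hz' : Function.Injective (z ∘ Fin.castSucc) := hz.comp (Fin.castSucc_injective r)
      have last_notMem : z (Fin.last r) ∉ univ.image y := by
        simpa using fun i => hyz i (Fin.last r)
      have last_notMem' : z (Fin.last r) ∉ univ.image (z ∘ Fin.castSucc) := by
        simp [hz.eq_iff, Fin.castSucc_ne_last]
      rw [tupleSum_succ, image_univ_eq_insert_last z,
        signedSubsetSum_insert_right last_notMem last_notMem', ih hy hz' fun i j => hyz _ _,
        prod_image hy.injOn, sum_image hy.injOn]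
      congr 1
      refine sum_congr rfl fun k _ => ?_
      have hk : Function.Injective (y ∘ k.succAbove) := hy.comp Fin.succAbove_right_injective
      rw [erase_image_univ hy, prod_image hk.injOn, prod_image hk.injOn,
        ih hk hz' fun i j => hyz _ _]
      rfl

end BothSides

/-- Lemma Gyz: `G_{p,r}(y; z) = ∑_{1≤d_1<…<d_p≤r} S̄ym_{y_1,…,y_p}[ ∏_{i=1}^p
( (1/(y_i − z_{d_i})) · ∏_{d_i<j≤r} (y_i − z_j + 1)/(y_i − z_j) ) ]`. -/
theorem G_eq_sum_over_tuples (p r : ℕ) (hp : 0 < p) (hpr : p ≤ r)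
    (y : Fin p → ℂ) (z : Fin r → ℂ) (hy : Function.Injective y)
    (hz : Function.Injective z) (hyz : ∀ i j, y i ≠ z j) :
    G p r hpr y z =
      ∑ d ∈ Finset.univ.filter (fun d : Fin p → Fin r => StrictMono d),
        ∑ τ : Equiv.Perm (Fin p),
          (∏ i : Fin p, ((1 / (y (τ i) - z (d i))) *
            ∏ j ∈ Finset.Ioi (d i), ((y (τ i) - z j + 1) / (y (τ i) - z j)))) *
          W (y ∘ τ) := by
  calc G p r hpr y z
    _ = signedSubsetSum (univ.image y) (univ.image z) := G_eq_signedSubsetSum hpr hy hz hyz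
    _ = tupleSum p r y z := (tupleSum_eq_signedSubsetSum hy hz hyz).symm
end

section
/- For positive integers p ≤ r, the rational function G_{p,r}(y_1,…,y_p; z_1,…,z_r) is symmetric in the variables y_1,…,y_p: for every permutation τ ∈ S_p, G_{p,r}(y_{τ(1)},…,y_{τ(p)}; z_1,…,z_r) = G_{p,r}(y_1,…,y_p; z_1,…,z_r). (It is symmetric in z_1,…,z_r by construction.) -/
/-! Adjacent transpositions generate `S_p`, so it suffices to exchange `y_k` and `y_{k+1}`. Group
the sum over `σ ∈ S_r` into pairs `{σ, σ * s}`, where `s` exchanges the positions of the two `z`'s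
facing `y_k` and `y_{k+1}`. Apart from the factors that involve only these two `y`'s and two `z`'s,
both summands of a pair have the same factors, and exchanging `y_k` and `y_{k+1}` only permutes
them. What remains is the case `p = r = 2`, a rational identity in four variables. -/

lemma sum_eq_sum_of_add_apply_eq {ι M : Type*} [Fintype ι] [AddCommMonoid M] [IsAddTorsionFree M]
    (e : Equiv.Perm ι) {f g : ι → M} (h : ∀ i, f i + f (e i) = g i + g (e i)) :
    ∑ i, f i = ∑ i, g i := by
  have two_nsmul_sum (f : ι → M) : 2 • ∑ i, f i = ∑ i, (f i + f (e i)) := by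
    rw [two_nsmul, Finset.sum_add_distrib, Equiv.sum_comp e f]
  apply nsmul_right_injective two_ne_zero
  simp only [two_nsmul_sum, h]

lemma swap_apply_of_notMem_pair {ι : Type*} [DecidableEq ι] {i k k' : ι}
    (hi : i ∉ ({k, k'} : Finset ι)) : Equiv.swap k k' i = i := by
  rw [Finset.mem_insert, Finset.mem_singleton, not_or] at hi
  exact Equiv.swap_apply_of_ne_of_ne hi.1 hi.2

section PairProducts

variable {ι M : Type*} [LinearOrder ι] [Fintype ι] [CommMonoid M] {k k' : ι}

/-- The product of `F i j` over all pairs `i < j` other than `(k, k')`. For `k ⋖ k'` it is the part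
of the product over all pairs that a transposition of `k` and `k'` in either argument merely
permutes. -/
def prodPairsExcept (k k' : ι) (F : ι → ι → M) : M :=
  ∏ x : ι × ι with x.1 < x.2 ∧ x ≠ (k, k'), F x.1 x.2

lemma prod_prod_Ioi_eq_mul_prodPairsExcept [LocallyFiniteOrderTop ι] (h : k < k')
    (F : ι → ι → M) :
    ∏ i, ∏ j ∈ Finset.Ioi i, F i j = F k k' * prodPairsExcept k k' F := by
  have prod_lt : ∏ x : ι × ι with x.1 < x.2, F x.1 x.2 = ∏ i, ∏ j ∈ Finset.Ioi i, F i j :=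
    Finset.prod_finset_product' _ _ _ (by simp)
  rw [← prod_lt, ← Finset.mul_prod_erase _ _ (a := (k, k')) (by simpa using h), prodPairsExcept,
    ← Finset.filter_ne', Finset.filter_filter]

lemma prodPairsExcept_swap_left (h : k ⋖ k') (F : ι → ι → M) :
    prodPairsExcept k k' (fun i j => F (Equiv.swap k k' i) j) = prodPairsExcept k k' F := by
  refine Finset.prod_equiv ((Equiv.swap k k').prodCongr (Equiv.refl ι)) ?_ fun _ _ => rfl
  rintro ⟨i, j⟩
  have k_lt : k < k' := h.lt
  have le_of_k_lt : k < j → k' ≤ j := h.ge_of_gt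
  simp only [Finset.mem_filter_univ, Equiv.prodCongr_apply, Prod.map_apply, Equiv.refl_apply,
    Equiv.swap_apply_def]
  grind

lemma prodPairsExcept_swap_right (h : k ⋖ k') (F : ι → ι → M) :
    prodPairsExcept k k' (fun i j => F i (Equiv.swap k k' j)) = prodPairsExcept k k' F := by
  refine Finset.prod_equiv ((Equiv.refl ι).prodCongr (Equiv.swap k k')) ?_ fun _ _ => rfl
  rintro ⟨i, j⟩
  have k_lt : k < k' := h.lt
  have le_of_lt_k' : i < k' → i ≤ k := h.le_of_lt
  simp only [Finset.mem_filter_univ, Equiv.prodCongr_apply, Prod.map_apply, Equiv.refl_apply,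
    Equiv.swap_apply_def]
  grind

end PairProducts

section TriangularCauchy

variable {ι K : Type*} [LinearOrder ι] [Fintype ι] [Field K] {k k' : ι}

/-- The rational function `∏ i, 1 / (y i - w i) * ∏ j > i, (y i - w j + 1) / (y i - w j)`, whose
weighted symmetrization is `G` up to a factorial. -/
def triangularCauchy [LocallyFiniteOrderTop ι] (y w : ι → K) : K :=
  ∏ i, (1 / (y i - w i) * ∏ j ∈ Finset.Ioi i, (y i - w j + 1) / (y i - w j))

/-- The product of all factors of `triangularCauchy y w` except those that involve only the
variables with indices `k` and `k'`. -/
def triangularCauchyRest (k k' : ι) (y w : ι → K) : K :=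
  (∏ i ∈ {k, k'}ᶜ, 1 / (y i - w i)) *
    prodPairsExcept k k' fun i j => (y i - w j + 1) / (y i - w j)

lemma triangularCauchy_two (a b u v : K) :
    triangularCauchy ![a, b] ![u, v] =
      1 / (a - u) * (1 / (b - v)) * ((a - v + 1) / (a - v)) := by
  simp [triangularCauchy, Fin.prod_univ_two, show Finset.Ioi (0 : Fin 2) = {1} from rfl,
    show Finset.Ioi (1 : Fin 2) = ∅ from rfl, mul_right_comm]

lemma triangularCauchy_eq_mul_rest [LocallyFiniteOrderTop ι] (h : k < k') (y w : ι → K) :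
    triangularCauchy y w =
      triangularCauchy ![y k, y k'] ![w k, w k'] * triangularCauchyRest k k' y w := by
  rw [triangularCauchy, Finset.prod_mul_distrib, prod_prod_Ioi_eq_mul_prodPairsExcept h,
    ← Finset.prod_mul_prod_compl {k, k'}, Finset.prod_pair h.ne, triangularCauchy_two,
    triangularCauchyRest]
  ring

lemma triangularCauchyRest_swap_left (h : k ⋖ k') (y w : ι → K) :
    triangularCauchyRest k k' (y ∘ Equiv.swap k k') w = triangularCauchyRest k k' y w :=
  congrArg₂ (· * ·)
    (Finset.prod_congr rfl fun i hi => by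
      rw [Function.comp_apply, swap_apply_of_notMem_pair (Finset.mem_compl.1 hi)])
    (prodPairsExcept_swap_left h fun i j => (y i - w j + 1) / (y i - w j))

lemma triangularCauchyRest_swap_right (h : k ⋖ k') (y w : ι → K) :
    triangularCauchyRest k k' y (w ∘ Equiv.swap k k') = triangularCauchyRest k k' y w :=
  congrArg₂ (· * ·)
    (Finset.prod_congr rfl fun i hi => by
      rw [Function.comp_apply, swap_apply_of_notMem_pair (Finset.mem_compl.1 hi)])
    (prodPairsExcept_swap_right h fun i j => (y i - w j + 1) / (y i - w j))

end TriangularCauchy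

section Weight

variable {r : ℕ} {l l' : Fin r}

/-- The product of all factors of `W t` except that of the pair `(l, l')`. -/
noncomputable def WRest (l l' : Fin r) (t : Fin r → ℂ) : ℂ :=
  prodPairsExcept l l' fun i j => (t i - t j - 1) / (t i - t j)

lemma W_two (u v : ℂ) : W ![u, v] = (u - v - 1) / (u - v) := by
  simp [W, Fin.prod_univ_two, show Finset.Ioi (0 : Fin 2) = {1} from rfl,
    show Finset.Ioi (1 : Fin 2) = ∅ from rfl]

lemma W_eq_mul_rest (h : l < l') (t : Fin r → ℂ) : W t = W ![t l, t l'] * WRest l l' t := by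
  rw [W, prod_prod_Ioi_eq_mul_prodPairsExcept h, W_two, WRest]

lemma WRest_swap (h : l ⋖ l') (t : Fin r → ℂ) :
    WRest l l' (t ∘ Equiv.swap l l') = WRest l l' t :=
  (prodPairsExcept_swap_left h fun i j =>
    (t i - t (Equiv.swap l l' j) - 1) / (t i - t (Equiv.swap l l' j))).trans
    (prodPairsExcept_swap_right h fun i j => (t i - t j - 1) / (t i - t j))

end Weight

section Symmetrand

variable {p r : ℕ} {s : Fin p → Fin r}

/-- The function whose symmetrization in `t` is `G`, up to the factor `1 / (r - p)!`; the variable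
`t (s i)` is the one facing `y i`, and `s = shiftIdx p r h` in the case of `G`. -/
noncomputable def symmetrand (s : Fin p → Fin r) (y : Fin p → ℂ) (t : Fin r → ℂ) : ℂ :=
  triangularCauchy y (t ∘ s) * W t

lemma G_eq_sum_symmetrand (h : p ≤ r) (y : Fin p → ℂ) (z : Fin r → ℂ) :
    G p r h y z = 1 / (Nat.factorial (r - p) : ℂ) *
      ∑ σ : Equiv.Perm (Fin r), symmetrand (shiftIdx p r h) y (z ∘ σ) :=
  rfl

lemma symmetrand_two_symm {a b u v : ℂ} (hau : a ≠ u) (hav : a ≠ v) (hbu : b ≠ u) (hbv : b ≠ v)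
    (huv : u ≠ v) :
    symmetrand id ![b, a] ![u, v] + symmetrand id ![b, a] ![v, u] =
      symmetrand id ![a, b] ![u, v] + symmetrand id ![a, b] ![v, u] := by
  have sub_ne_au := sub_ne_zero.2 hau
  have sub_ne_av := sub_ne_zero.2 hav
  have sub_ne_bu := sub_ne_zero.2 hbu
  have sub_ne_bv := sub_ne_zero.2 hbv
  have sub_ne_uv := sub_ne_zero.2 huv
  simp only [symmetrand, Function.comp_id, triangularCauchy_two, W_two, ← neg_sub u v]
  field_simp
  ring

lemma symmetrand_eq_mul_rest {k k' : Fin p} (h : k < k') (hs : s k < s k') (y : Fin p → ℂ)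
    (t : Fin r → ℂ) :
    symmetrand s y t = symmetrand id ![y k, y k'] ![t (s k), t (s k')] *
      (triangularCauchyRest k k' y (t ∘ s) * WRest (s k) (s k') t) := by
  simp only [symmetrand, triangularCauchy_eq_mul_rest h y, W_eq_mul_rest hs t, Function.comp_id,
    Function.comp_apply]
  ring

lemma symmetrand_swap_add_symmetrand_swap {k k' : Fin p} (h : k ⋖ k') (hs : Function.Injective s)
    (hsk : s k ⋖ s k') {y : Fin p → ℂ} {t : Fin r → ℂ} (ht : Function.Injective t)
    (hyt : ∀ i j, y i ≠ t j) :
    symmetrand s (y ∘ Equiv.swap k k') t +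
        symmetrand s (y ∘ Equiv.swap k k') (t ∘ Equiv.swap (s k) (s k')) =
      symmetrand s y t + symmetrand s y (t ∘ Equiv.swap (s k) (s k')) := by
  have swap_comp : Equiv.swap (s k) (s k') ∘ s = s ∘ Equiv.swap k k' :=
    funext (hs.swap_apply k k')
  have two_symm := symmetrand_two_symm (hyt k (s k)) (hyt k (s k')) (hyt k' (s k))
    (hyt k' (s k')) (ht.ne hsk.lt.ne)
  simp only [symmetrand_eq_mul_rest h.lt hsk.lt, Function.comp_assoc, swap_comp, WRest_swap hsk]
  simp only [← Function.comp_assoc, triangularCauchyRest_swap_left h,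
    triangularCauchyRest_swap_right h, Function.comp_apply, Equiv.swap_apply_left,
    Equiv.swap_apply_right, ← add_mul, two_symm]

end Symmetrand

lemma shiftIdx_injective {p r : ℕ} (h : p ≤ r) : Function.Injective (shiftIdx p r h) := by
  intro i j hij
  simpa [shiftIdx, Fin.ext_iff] using hij

lemma shiftIdx_covBy_shiftIdx {p r : ℕ} (h : p ≤ r) {k k' : Fin p} (hk : k ⋖ k') :
    shiftIdx p r h k ⋖ shiftIdx p r h k' := by
  rw [Fin.covBy_iff, Nat.covBy_iff_add_one_eq] at hk ⊢
  simp only [shiftIdx]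
  lia

lemma G_comp_swap_of_covBy {p r : ℕ} (hpr : p ≤ r) {y : Fin p → ℂ} {z : Fin r → ℂ}
    (hz : Function.Injective z) (hyz : ∀ i j, y i ≠ z j) {k k' : Fin p} (h : k ⋖ k') :
    G p r hpr (y ∘ Equiv.swap k k') z = G p r hpr y z := by
  rw [G_eq_sum_symmetrand, G_eq_sum_symmetrand]
  congr 1
  refine sum_eq_sum_of_add_apply_eq
    (Equiv.mulRight (Equiv.swap (shiftIdx p r hpr k) (shiftIdx p r hpr k'))) fun σ => ?_
  exact symmetrand_swap_add_symmetrand_swap h (shiftIdx_injective hpr)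
    (shiftIdx_covBy_shiftIdx hpr h) (hz.comp σ.injective) fun i j => hyz i (σ j)

/-- `G_{p,r}` is a symmetric function of `y_1, …, y_p`. -/
theorem G_symmetric_in_y (p r : ℕ) (hp : 0 < p) (hpr : p ≤ r)
    (y : Fin p → ℂ) (z : Fin r → ℂ)
    (hz : Function.Injective z) (hyz : ∀ i j, y i ≠ z j)
    (τ : Equiv.Perm (Fin p)) :
    G p r hpr (y ∘ τ) z = G p r hpr y z := by
  obtain ⟨n, rfl⟩ := Nat.exists_eq_add_one.2 hp
  have hτ : τ ∈ Submonoid.closure (Set.range fun i : Fin n => Equiv.swap i.castSucc i.succ) := by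
    simp only [Equiv.Perm.mclosure_swap_castSucc_succ, Submonoid.mem_top]
  induction hτ using Submonoid.closure_induction generalizing y with
  | mem _ adjacent =>
    obtain ⟨i, rfl⟩ := adjacent
    exact G_comp_swap_of_covBy hpr hz hyz (by simp [Fin.covBy_iff])
  | one => rfl
  | mul a b _ _ iha ihb =>
    calc G (n + 1) r hpr ((y ∘ a) ∘ b) z
        = G (n + 1) r hpr (y ∘ a) z := ihb (y ∘ a) fun i j => hyz (a i) j
      _ = G (n + 1) r hpr y z := iha y hyz
end

section
/- Let p ≤ r be positive integers. Then Sym_{z_1,…,z_r}[ ∏_{i=1}^p ( (1/(y_i − z_{i+r−p})) · ∏_{i<j≤p} (q y_i − q^{-1} z_{j+r−p})/(y_i − z_{j+r−p}) ) · ∏_{1≤i<j≤r} (q^{-1} z_i − q z_j)/(z_i − z_j) ] = [r−p]_q! · Σ_{1≤d_1<…<d_p≤r} Sym_{y_1,…,y_p}[ ∏_{i=1}^p ( (q^{i−d_i}/(y_i − z_{d_i})) · ∏_{d_i<j≤r} (q y_i − q^{-1} z_j)/(y_i − z_j) ) · ∏_{1≤i<j≤p} (q^{-1} y_i − q y_j)/(y_i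 − y_j) ], the sum being taken over all p-tuples d = (d_1,…,d_p) with 1 ≤ d_1 < … < d_p ≤ r; this is an identity of rational functions in q, y_1,…,y_p, z_1,…,z_r. -/
open scoped Classical

/-- The q-number `[n]_q = q^{n−1} + q^{n−3} + … + q^{1−n}`. -/
noncomputable def qInt (q : ℂ) (n : ℕ) : ℂ :=
  ∑ i ∈ Finset.range n, q ^ (n - 1 - i) * q⁻¹ ^ i

/-- The q-factorial `[k]_q! = ∏_{r=1}^k [r]_q`. -/
noncomputable def qFact (q : ℂ) (k : ℕ) : ℂ :=
  ∏ r ∈ Finset.range k, qInt q (r + 1)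

/-!
Call `F(Y, Z)` the `(q, t)`-deformation of the Cauchy permanent `∑ π, ∏ y ∈ Y, 1 / (y - π y)` over
the injections `π : Y → Z`, where `t` stands for `q⁻¹`. Both sides of the identity are `[r - p]_q!`
times `F(Y, Z)`. Sorting the permutations on the left by the variable they put last expands `F`
along the row `y_p`; after `p` such expansions a symmetrization of the constant `1` in `r - p`
variables is left, and it equals `[r - p]_q!`. Sorting the tuples `d` on the right by whether
`d_p = r` expands `F` along the column `z_r`.

It remains to see that a single function satisfies all row and column expansions. By induction on
`Z`, expanding along a row `y` and then a column `x` gives sums over `k ∈ Z` of terms with the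
poles `1 / (y - k)`, `1 / (x - k)` and `1 / (j - k)`, `j ∈ Y`; partial fractions resum them to row
expansions at `y`, `x` and `j`, and what is left over compared with the column expansion cancels
by the partial fraction expansion of `∏ a ∈ S, (t a - q x) / (a - x)` for `S = Y` and `S = Z`.
-/

namespace DeformedCauchy

open Finset

variable {K : Type*} [Field K]

section CauchySum

/-- The rational function of `x` vanishing at infinity with simple poles at the `k ∈ S` and residues
`c k`; for `x ∈ S` the polar term is dropped, by the convention `a / 0 = 0`. -/
noncomputable def cauchySum (S : Finset K) (c : K → K) (x : K) : K :=
  ∑ k ∈ S, c k / (x - k)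

lemma cauchySum_insert {S : Finset K} {b : K} (hb : b ∉ S) (c : K → K) (x : K) :
    cauchySum (insert b S) c x = c b / (x - b) + cauchySum S c x :=
  sum_insert hb

lemma cauchySum_congr {S : Finset K} {c c' : K → K} (h : ∀ k ∈ S, c k = c' k) (x : K) :
    cauchySum S c x = cauchySum S c' x :=
  sum_congr rfl fun k hk ↦ by rw [h k hk]

lemma cauchySum_const_mul (S : Finset K) (a : K) (c : K → K) (x : K) :
    cauchySum S (fun k ↦ a * c k) x = a * cauchySum S c x := by
  simp only [cauchySum, mul_sum, mul_div_assoc]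

lemma cauchySum_add_mul_sum {ι : Type*} (S : Finset K) (J : Finset ι) (c : K → K) (a : K)
    (d : ι → K) (g : ι → K → K) (x : K) :
    cauchySum S (fun k ↦ c k + a * ∑ j ∈ J, d j * g j k) x =
      cauchySum S c x + a * ∑ j ∈ J, d j * cauchySum S (g j) x := by
  simp only [cauchySum, add_div, sum_add_distrib, mul_sum, sum_div, mul_div_assoc]
  rw [sum_comm]

lemma cauchySum_div_sub {S : Finset K} {x j : K} (hx : x ∉ S) (hj : j ∉ S) (hjx : j ≠ x)
    (c : K → K) :
    cauchySum S (fun k ↦ c k / (j - k)) x = (cauchySum S c x - cauchySum S c j) / (j - x) := by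
  simp only [cauchySum, ← sum_sub_distrib, sum_div]
  refine sum_congr rfl fun k hk ↦ ?_
  have hxk : x - k ≠ 0 := sub_ne_zero.2 (ne_of_mem_of_not_mem hk hx).symm
  have hjk : j - k ≠ 0 := sub_ne_zero.2 (ne_of_mem_of_not_mem hk hj).symm
  have hjx : j - x ≠ 0 := sub_ne_zero.2 hjx
  field_simp
  ring

end CauchySum

section Scatter

/-- The factor `(t a - q b) / (a - b)` from which all products are built. At `t = q⁻¹` it is the
factor of the symmetrized products in the theorem, and `scatter q q⁻¹ b a` is the mixed factor
`(q a - q⁻¹ b) / (a - b)`. -/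
noncomputable def scatter (q t a b : K) : K := (t * a - q * b) / (a - b)

variable {q t : K}

lemma scatter_swap (q t a b : K) : scatter q t b a = (q * a - t * b) / (a - b) := by
  rw [scatter, ← neg_sub (q * a), ← neg_sub a, neg_div_neg_eq]

lemma scatter_eq_sub {a b : K} (hab : a ≠ b) :
    scatter q t a b = q - (q - t) * a / (a - b) := by
  have : a - b ≠ 0 := sub_ne_zero.2 hab
  rw [scatter]
  field_simp
  ring

lemma scatter_right_div_sub {b k x : K} (hbk : b ≠ k) (hxk : x ≠ k) (hbx : b ≠ x) :
    scatter q t b k / (x - k) =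
      scatter q t b x / (x - k) + (q - t) * b / (b - x) / (b - k) := by
  have : b - k ≠ 0 := sub_ne_zero.2 hbk
  have : x - k ≠ 0 := sub_ne_zero.2 hxk
  have : b - x ≠ 0 := sub_ne_zero.2 hbx
  rw [scatter_eq_sub hbk, scatter_eq_sub hbx]
  field_simp
  ring

lemma scatter_left_div_sub {j k y : K} (hjk : j ≠ k) (hyk : y ≠ k) (hyj : y ≠ j) :
    scatter q t k j / (y - k) =
      scatter q t y j / (y - k) + (q - t) * j / (y - j) / (j - k) := by
  have : j - k ≠ 0 := sub_ne_zero.2 hjk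
  have : y - k ≠ 0 := sub_ne_zero.2 hyk
  have : y - j ≠ 0 := sub_ne_zero.2 hyj
  rw [scatter_swap, scatter]
  field_simp
  ring

variable {S : Finset K}

lemma sum_scatter_mul {b : K} (hb : b ∉ S) (c : K → K) :
    ∑ k ∈ S, scatter q t b k * c k =
      q * ∑ k ∈ S, c k - (q - t) * b * cauchySum S c b := by
  rw [cauchySum, mul_sum, mul_sum, ← sum_sub_distrib]
  refine sum_congr rfl fun k hk ↦ ?_
  rw [scatter_eq_sub (ne_of_mem_of_not_mem hk hb).symm]
  ring

lemma cauchySum_scatter_right_mul {b x : K} (hb : b ∉ S) (hx : x ∉ S) (hbx : b ≠ x) (c : K → K) :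
    cauchySum S (fun k ↦ scatter q t b k * c k) x =
      scatter q t b x * cauchySum S c x + (q - t) * b / (b - x) * cauchySum S c b := by
  simp only [cauchySum, mul_sum, ← sum_add_distrib]
  refine sum_congr rfl fun k hk ↦ ?_
  rw [mul_div_right_comm, scatter_right_div_sub (ne_of_mem_of_not_mem hk hb).symm
    (ne_of_mem_of_not_mem hk hx).symm hbx]
  ring

lemma cauchySum_scatter_left_mul {j y : K} (hj : j ∉ S) (hy : y ∉ S) (hyj : y ≠ j) (c : K → K) :
    cauchySum S (fun k ↦ scatter q t k j * c k) y =
      scatter q t y j * cauchySum S c y + (q - t) * j / (y - j) * cauchySum S c j := by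
  simp only [cauchySum, mul_sum, ← sum_add_distrib]
  refine sum_congr rfl fun k hk ↦ ?_
  rw [mul_div_right_comm, scatter_left_div_sub (ne_of_mem_of_not_mem hk hj).symm
    (ne_of_mem_of_not_mem hk hy).symm hyj]
  ring

lemma cauchySum_scatter_mul_scatter_mul {x y j : K} (hx : x ∉ S) (hy : y ∉ S) (hj : j ∉ S)
    (hxy : x ≠ y) (hxj : x ≠ j) (hyj : y ≠ j) (c : K → K) :
    cauchySum S (fun k ↦ scatter q t x k * (scatter q t k j * c k)) y =
      scatter q t x y * scatter q t y j * cauchySum S c y +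
      (q - t) * x / (x - y) * scatter q t x j * cauchySum S c x +
      (q - t) * j / (y - j) * scatter q t x j * cauchySum S c j := by
  rw [cauchySum_scatter_right_mul hx hy hxy, cauchySum_scatter_left_mul hj hy hyj,
    cauchySum_scatter_left_mul hj hx hxj]
  linear_combination
    (-(q - t) * j * cauchySum S c j) * scatter_right_div_sub (q := q) (t := t) hxj hyj hxy

end Scatter

section Residue

/-- The coefficient at the pole `x = k` of `∏ a ∈ S, scatter q t a x`, with the factor `(q - t) x`
left out (see `prod_scatter_eq`). -/
noncomputable def residue (q t : K) (S : Finset K) (k : K) : K :=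
  ∏ a ∈ S.erase k, scatter q t a k

/-- The two-parameter `q`-number `q ^ (n - 1) + q ^ (n - 2) t + ⋯ + t ^ (n - 1)`, which is `[n]_q`
at `t = q⁻¹`. -/
noncomputable def qtInt (q t : K) (n : ℕ) : K :=
  ∑ i ∈ range n, q ^ (n - 1 - i) * t ^ i

variable {q t : K} {S : Finset K}

lemma residue_insert_self {b : K} (hb : b ∉ S) :
    residue q t (insert b S) b = ∏ a ∈ S, scatter q t a b := by
  rw [residue, erase_insert hb]

lemma residue_insert_of_mem {b k : K} (hb : b ∉ S) (hk : k ∈ S) :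
    residue q t (insert b S) k = scatter q t b k * residue q t S k := by
  rw [residue, erase_insert_of_ne (ne_of_mem_of_not_mem hk hb).symm,
    prod_insert (mt mem_of_mem_erase hb), residue]

theorem prod_scatter_eq {x : K} (hx : x ∉ S) :
    ∏ a ∈ S, scatter q t a x = t ^ #S + (q - t) * x * cauchySum S (residue q t S) x := by
  induction S using Finset.induction_on generalizing x with
  | empty => simp [cauchySum]
  | insert b S hb ih =>
    obtain ⟨hxb, hxS⟩ : x ≠ b ∧ x ∉ S := by simpa using hx
    rw [prod_insert hb, card_insert_of_notMem hb, cauchySum_insert hb, residue_insert_self hb,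
      cauchySum_congr (fun k hk ↦ residue_insert_of_mem hb hk) x,
      cauchySum_scatter_right_mul hb hxS hxb.symm, ih hxS, ih hb]
    have : b - x ≠ 0 := sub_ne_zero.2 hxb.symm
    rw [scatter_eq_sub hxb.symm, ← neg_sub b x]
    field_simp
    ring

lemma qtInt_succ (q t : K) (n : ℕ) : qtInt q t (n + 1) = t ^ n + q * qtInt q t n := by
  rw [qtInt, sum_range_succ, qtInt, mul_sum, add_comm]
  congr 1
  · simp
  · refine sum_congr rfl fun i hi ↦ ?_
    have := mem_range.1 hi
    rw [← mul_assoc, ← pow_succ', show n - 1 - i + 1 = n + 1 - 1 - i by lia]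

theorem sum_residue (S : Finset K) : ∑ k ∈ S, residue q t S k = qtInt q t #S := by
  induction S using Finset.induction_on with
  | empty => simp [qtInt]
  | insert b S hb ih =>
    rw [sum_insert hb, residue_insert_self hb, card_insert_of_notMem hb,
      sum_congr rfl fun k hk ↦ residue_insert_of_mem hb hk, sum_scatter_mul hb, ih,
      prod_scatter_eq hb, qtInt_succ]
    ring

lemma sum_residue_div_mul_div {x y : K} (hx : x ∉ S) (hy : y ∉ S) (hyx : y ≠ x) :
    (q - t) * ∑ j ∈ S, residue q t S j / (j - x) * (j / (y - j)) =
      ((∏ a ∈ S, scatter q t a y) - ∏ a ∈ S, scatter q t a x) / (y - x) := by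
  rw [prod_scatter_eq hx, prod_scatter_eq hy, add_sub_add_left_eq_sub, cauchySum, cauchySum]
  simp only [mul_sum, ← sum_sub_distrib, sum_div]
  refine sum_congr rfl fun j hj ↦ ?_
  have : j - x ≠ 0 := sub_ne_zero.2 (ne_of_mem_of_not_mem hj hx)
  have : y - j ≠ 0 := sub_ne_zero.2 (ne_of_mem_of_not_mem hj hy).symm
  have : y - x ≠ 0 := sub_ne_zero.2 hyx
  rw [← neg_sub j x]
  field_simp
  ring

end Residue

section Expansion

/-- The coefficient of `1 / (y - w)` in the expansion of `F (insert y Y) Z` along the row `y`. -/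
noncomputable def rowCoeff (q t : K) (F : Finset K → Finset K → K) (Y Z : Finset K) (w : K) : K :=
  residue q t Z w * ((∏ u ∈ Y, scatter q t w u) * F Y (Z.erase w))

/-- The Laplace-type expansion of `F (insert y Y) Z` along the row `y`, which pairs `y` with each
element of `Z` in turn. -/
noncomputable def rowExpansion (q t : K) (F : Finset K → Finset K → K) (Y Z : Finset K)
    (y : K) : K :=
  cauchySum Z (rowCoeff q t F Y Z) y

/-- The Laplace-type expansion of `F Y (insert x Z)` along the column `x`, which leaves `x` unpaired
or pairs it with each element of `Y` in turn. The power of `t` is an integer power because `Y` may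
be larger than `Z`. -/
noncomputable def colExpansion (q t : K) (F : Finset K → Finset K → K) (Y Z : Finset K)
    (x : K) : K :=
  (∏ u ∈ Y, scatter q t x u) * F Y Z +
    t ^ ((#Z : ℤ) + 1 - #Y) * ∑ j ∈ Y,
      residue q t Y j / (j - x) * ((∏ u ∈ Y.erase j, scatter q t x u) * F (Y.erase j) Z)

/-- The function `F` can be expanded along any row and any column, for the column set `Z` and every
row set disjoint from it. -/
structure ExpandsAt (q t : K) (F : Finset K → Finset K → K) (Z : Finset K) : Prop where
  row : ∀ ⦃Y y⦄, Disjoint Y Z → y ∉ Y → y ∉ Z → F (insert y Y) Z = rowExpansion q t F Y Z y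
  col : ∀ ⦃Y x⦄, Disjoint Y Z → x ∈ Z → F Y Z = colExpansion q t F Y (Z.erase x) x

variable {q t : K} {F : Finset K → Finset K → K} {Y Z : Finset K}

lemma ExpandsAt.row_erase (hF : ExpandsAt q t F Z) (hYZ : Disjoint Y Z) {j : K} (hj : j ∈ Y) :
    F Y Z = rowExpansion q t F (Y.erase j) Z j := by
  rw [← hF.row (hYZ.mono_left (erase_subset _ _)) (notMem_erase _ _) (disjoint_left.1 hYZ hj),
    insert_erase hj]

lemma ExpandsAt.row_insert_erase (hF : ExpandsAt q t F Z) (hYZ : Disjoint Y Z) {x : K}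
    (hxY : x ∉ Y) (hxZ : x ∉ Z) (j : K) :
    F (insert x (Y.erase j)) Z = rowExpansion q t F (Y.erase j) Z x :=
  hF.row (hYZ.mono_left (erase_subset _ _)) (mt mem_of_mem_erase hxY) hxZ

lemma colExpansion_erase {k : K} (hk : k ∈ Z) (Y : Finset K) (x : K) :
    colExpansion q t F Y (Z.erase k) x =
      (∏ u ∈ Y, scatter q t x u) * F Y (Z.erase k) +
        t ^ ((#Z : ℤ) - #Y) * ∑ j ∈ Y, residue q t Y j / (j - x) *
          ((∏ u ∈ Y.erase j, scatter q t x u) * F (Y.erase j) (Z.erase k)) := by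
  rw [colExpansion, cast_card_erase_of_mem hk, sub_add_cancel]

lemma ExpandsAt.mul_residue (hF : ExpandsAt q t F Z) (hYZ : Disjoint Y Z) {k : K}
    (hk : k ∈ Z) :
    F Y Z * residue q t Z k = rowCoeff q t F Y Z k +
      t ^ ((#Z : ℤ) - #Y) * ∑ j ∈ Y, residue q t Y j *
        (rowCoeff q t F (Y.erase j) Z k / (j - k)) := by
  rw [hF.col hYZ hk, colExpansion_erase hk, add_mul, mul_assoc _ (∑ _ ∈ _, _), sum_mul]
  congr 1
  · rw [rowCoeff]
    ring
  congr 1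
  refine sum_congr rfl fun j _ ↦ ?_
  rw [rowCoeff]
  ring

theorem ExpandsAt.mul_cauchySum_residue (hF : ExpandsAt q t F Z) (hYZ : Disjoint Y Z) {x : K}
    (hxY : x ∉ Y) (hxZ : x ∉ Z) :
    F Y Z * cauchySum Z (residue q t Z) x = F (insert x Y) Z +
      t ^ ((#Z : ℤ) - #Y) * (∑ j ∈ Y, residue q t Y j / (j - x) * F (insert x (Y.erase j)) Z +
        F Y Z * cauchySum Y (residue q t Y) x) := by
  rw [← cauchySum_const_mul, cauchySum_congr (fun k hk ↦ hF.mul_residue hYZ hk),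
    cauchySum_add_mul_sum, ← rowExpansion, ← hF.row hYZ hxY hxZ, cauchySum,
    mul_sum Y _ (F Y Z), ← sum_add_distrib]
  congr 2
  refine sum_congr rfl fun j hj ↦ ?_
  rw [cauchySum_div_sub hxZ (disjoint_left.1 hYZ hj) (ne_of_mem_of_not_mem hj hxY),
    ← rowExpansion, ← rowExpansion, ← hF.row_erase hYZ hj, ← hF.row_insert_erase hYZ hxY hxZ,
    ← neg_sub j x, div_neg]
  ring

theorem ExpandsAt.prod_scatter_mul (ht : t ≠ 0) (hF : ExpandsAt q t F Z) (hYZ : Disjoint Y Z)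
    {x : K} (hxY : x ∉ Y) (hxZ : x ∉ Z) :
    (∏ a ∈ Z, scatter q t a x) * F Y Z =
      (q - t) * x * F (insert x Y) Z + t ^ ((#Z : ℤ) - #Y) *
        ((q - t) * x * ∑ j ∈ Y, residue q t Y j / (j - x) * F (insert x (Y.erase j)) Z +
          (∏ a ∈ Y, scatter q t a x) * F Y Z) := by
  have hpow : t ^ #Z = t ^ ((#Z : ℤ) - #Y) * t ^ #Y := by
    rw [← zpow_natCast, ← zpow_natCast, ← zpow_add₀ ht, sub_add_cancel]
  rw [prod_scatter_eq hxZ, prod_scatter_eq hxY, hpow]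
  linear_combination ((q - t) * x) * hF.mul_cauchySum_residue hYZ hxY hxZ

lemma rowCoeff_insert {x k : K} (hx : x ∉ Z) (hk : k ∈ Z)
    (hF : ExpandsAt q t F (insert x (Z.erase k))) (hYZ : Disjoint Y Z) (hxY : x ∉ Y) :
    rowCoeff q t F Y (insert x Z) k =
      (∏ u ∈ Y, scatter q t x u) * (scatter q t x k * rowCoeff q t F Y Z k) +
        t ^ ((#Z : ℤ) - #Y) * ∑ j ∈ Y,
          residue q t Y j / (j - x) * (∏ u ∈ Y.erase j, scatter q t x u) *
            (scatter q t x k * (scatter q t k j * rowCoeff q t F (Y.erase j) Z k)) := by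
  have hd : Disjoint Y (insert x (Z.erase k)) :=
    disjoint_insert_right.2 ⟨hxY, hYZ.mono_right (erase_subset _ _)⟩
  rw [rowCoeff, residue_insert_of_mem hx hk, erase_insert_of_ne (ne_of_mem_of_not_mem hk hx).symm,
    hF.col hd (mem_insert_self _ _), erase_insert (mt mem_of_mem_erase hx), colExpansion_erase hk,
    mul_add, mul_add]
  congr 1
  · rw [rowCoeff]
    ring
  · simp only [mul_sum]
    refine sum_congr rfl fun j hj ↦ ?_
    rw [rowCoeff, ← mul_prod_erase Y (scatter q t k) hj]
    ring

theorem rowExpansion_insert {x y : K} (hF : ExpandsAt q t F Z)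
    (hF' : ∀ k ∈ Z, ExpandsAt q t F (insert x (Z.erase k))) (hYZ : Disjoint Y Z)
    (hxY : x ∉ Y) (hxZ : x ∉ Z) (hyY : y ∉ Y) (hyZ : y ∉ Z) (hxy : x ≠ y) :
    rowExpansion q t F Y (insert x Z) y =
      (∏ a ∈ Z, scatter q t a x) * ((∏ u ∈ Y, scatter q t x u) * F Y Z) / (y - x) +
      ((∏ u ∈ Y, scatter q t x u) *
        (scatter q t x y * F (insert y Y) Z + (q - t) * x / (x - y) * F (insert x Y) Z) +
      t ^ ((#Z : ℤ) - #Y) * ∑ j ∈ Y,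
        residue q t Y j / (j - x) * (∏ u ∈ Y.erase j, scatter q t x u) *
          (scatter q t x y * scatter q t y j * F (insert y (Y.erase j)) Z +
            (q - t) * x / (x - y) * scatter q t x j * F (insert x (Y.erase j)) Z +
            (q - t) * j / (y - j) * scatter q t x j * F Y Z)) := by
  rw [rowExpansion, cauchySum_insert hxZ,
    cauchySum_congr (fun k hk ↦ rowCoeff_insert hxZ hk (hF' k hk) hYZ hxY),
    cauchySum_add_mul_sum, cauchySum_const_mul,
    cauchySum_scatter_right_mul hxZ hyZ hxy, ← rowExpansion, ← rowExpansion,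
    ← hF.row hYZ hyY hyZ, ← hF.row hYZ hxY hxZ, rowCoeff, residue_insert_self hxZ,
    erase_insert hxZ]
  congr 3
  refine sum_congr rfl fun j hj ↦ ?_
  rw [cauchySum_scatter_mul_scatter_mul hxZ hyZ (disjoint_left.1 hYZ hj) hxy
      (ne_of_mem_of_not_mem hj hxY).symm (ne_of_mem_of_not_mem hj hyY).symm,
    ← rowExpansion, ← rowExpansion, ← rowExpansion, ← hF.row_erase hYZ hj,
    ← hF.row_insert_erase hYZ hxY hxZ, ← hF.row_insert_erase hYZ hyY hyZ]

lemma colExpansion_insert {x y : K} (hyY : y ∉ Y) :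
    colExpansion q t F (insert y Y) Z x =
      scatter q t x y * (∏ u ∈ Y, scatter q t x u) * F (insert y Y) Z +
      t ^ ((#Z : ℤ) - #Y) *
        ((∏ u ∈ Y, scatter q t u y) / (y - x) * ((∏ u ∈ Y, scatter q t x u) * F Y Z) +
        ∑ j ∈ Y, residue q t Y j / (j - x) * (∏ u ∈ Y.erase j, scatter q t x u) *
          (scatter q t x y * scatter q t y j * F (insert y (Y.erase j)) Z)) := by
  rw [colExpansion, prod_insert hyY, sum_insert hyY, erase_insert hyY, residue_insert_self hyY,
    card_insert_of_notMem hyY, Nat.cast_add_one, add_sub_add_right_eq_sub]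
  congr 3
  refine sum_congr rfl fun j hj ↦ ?_
  rw [residue_insert_of_mem hyY hj, erase_insert_of_ne (ne_of_mem_of_not_mem hj hyY).symm,
    prod_insert (mt mem_of_mem_erase hyY)]
  ring

theorem rowExpansion_insert_eq_colExpansion_insert (ht : t ≠ 0) {x y : K}
    (hF : ExpandsAt q t F Z) (hF' : ∀ k ∈ Z, ExpandsAt q t F (insert x (Z.erase k)))
    (hYZ : Disjoint Y Z) (hxY : x ∉ Y) (hxZ : x ∉ Z) (hyY : y ∉ Y) (hyZ : y ∉ Z) (hxy : x ≠ y) :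
    rowExpansion q t F Y (insert x Z) y = colExpansion q t F (insert y Y) Z x := by
  have hsum : ∑ j ∈ Y, residue q t Y j / (j - x) * (∏ u ∈ Y.erase j, scatter q t x u) *
        (scatter q t x y * scatter q t y j * F (insert y (Y.erase j)) Z +
          (q - t) * x / (x - y) * scatter q t x j * F (insert x (Y.erase j)) Z +
          (q - t) * j / (y - j) * scatter q t x j * F Y Z) =
      ∑ j ∈ Y, residue q t Y j / (j - x) * (∏ u ∈ Y.erase j, scatter q t x u) *
        (scatter q t x y * scatter q t y j * F (insert y (Y.erase j)) Z) +
      (∏ u ∈ Y, scatter q t x u) * ((q - t) * x / (x - y) *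
          (∑ j ∈ Y, residue q t Y j / (j - x) * F (insert x (Y.erase j)) Z) +
        ((q - t) * ∑ j ∈ Y, residue q t Y j / (j - x) * (j / (y - j))) * F Y Z) := by
    simp only [mul_add, mul_sum, sum_mul, ← sum_add_distrib]
    refine sum_congr rfl fun j hj ↦ ?_
    rw [← mul_prod_erase Y _ hj]
    ring
  rw [rowExpansion_insert hF hF' hYZ hxY hxZ hyY hyZ hxy, colExpansion_insert hyY, hsum,
    sum_residue_div_mul_div hxY hyY hxy.symm, ← neg_sub y x, div_neg]
  linear_combination ((∏ u ∈ Y, scatter q t x u) / (y - x)) *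
    hF.prod_scatter_mul ht hYZ hxY hxZ

end Expansion

section CauchyPermanent

/-- The `(q, t)`-deformation of the rectangular Cauchy permanent `∑ π, ∏ y ∈ Y, 1 / (y - π y)`, `π`
ranging over the injections `Y → Z`, which is its value at `q = t = 1`. It is defined by expansion
along arbitrarily chosen rows. -/
noncomputable def cauchyPermanent (q t : K) (Y Z : Finset K) : K :=
  if hY : Y.Nonempty then
    ∑ w ∈ Z, residue q t Z w * ((∏ u ∈ Y.erase hY.choose, scatter q t w u) *
      cauchyPermanent q t (Y.erase hY.choose) (Z.erase w)) / (hY.choose - w)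
  else 1
termination_by #Y
decreasing_by exact card_erase_lt_of_mem hY.choose_spec

variable {q t : K} {Y Z : Finset K}

lemma cauchyPermanent_empty_left (Z : Finset K) : cauchyPermanent q t ∅ Z = 1 := by
  rw [cauchyPermanent, dif_neg Finset.not_nonempty_empty]

lemma exists_cauchyPermanent_eq_rowExpansion (hY : Y.Nonempty) (Z : Finset K) :
    ∃ y ∈ Y, cauchyPermanent q t Y Z =
      rowExpansion q t (cauchyPermanent q t) (Y.erase y) Z y :=
  ⟨hY.choose, hY.choose_spec, by rw [cauchyPermanent, dif_pos hY]; rfl⟩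

lemma cauchyPermanent_empty_right (hY : Y.Nonempty) : cauchyPermanent q t Y ∅ = 0 := by
  obtain ⟨y, -, h⟩ := exists_cauchyPermanent_eq_rowExpansion (q := q) (t := t) hY ∅
  rw [h, rowExpansion, cauchySum, sum_empty]

lemma expandsAt_cauchyPermanent_of_row_eq_col
    (h : ∀ Y y x, Disjoint Y Z → y ∈ Y → x ∈ Z →
      rowExpansion q t (cauchyPermanent q t) (Y.erase y) Z y =
        colExpansion q t (cauchyPermanent q t) Y (Z.erase x) x) :
    ExpandsAt q t (cauchyPermanent q t) Z := by
  have col : ∀ ⦃Y x⦄, Disjoint Y Z → x ∈ Z → cauchyPermanent q t Y Z =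
      colExpansion q t (cauchyPermanent q t) Y (Z.erase x) x := by
    intro Y x hYZ hx
    obtain rfl | hY := Y.eq_empty_or_nonempty
    · simp [colExpansion, cauchyPermanent_empty_left]
    · obtain ⟨y, hy, hrow⟩ := exists_cauchyPermanent_eq_rowExpansion (q := q) (t := t) hY Z
      rw [hrow, h Y y x hYZ hy hx]
  refine ⟨fun Y y hYZ hyY hyZ ↦ ?_, col⟩
  obtain rfl | ⟨x, hx⟩ := Z.eq_empty_or_nonempty
  · rw [cauchyPermanent_empty_right (insert_nonempty _ _), rowExpansion, cauchySum, sum_empty]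
  · have hd : Disjoint (insert y Y) Z := disjoint_insert_left.2 ⟨hyZ, hYZ⟩
    rw [col hd hx, ← h _ y x hd (mem_insert_self _ _) hx, erase_insert hyY]

theorem expandsAt_cauchyPermanent (ht : t ≠ 0) (Z : Finset K) :
    ExpandsAt q t (cauchyPermanent q t) Z := by
  induction Z using Finset.strongInduction with
  | H Z ih =>
    refine expandsAt_cauchyPermanent_of_row_eq_col fun Y y x hYZ hy hx ↦ ?_
    have hF : ∀ k ∈ Z, ExpandsAt q t (cauchyPermanent q t) (Z.erase k) :=
      fun k hk ↦ ih _ (erase_ssubset hk)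
    have hyZ : y ∉ Z := disjoint_left.1 hYZ hy
    have hstep := rowExpansion_insert_eq_colExpansion_insert ht (hF x hx)
      (fun k hk ↦ by
        rw [← erase_insert_of_ne (ne_of_mem_erase hk).symm, insert_erase hx]
        exact hF k (mem_of_mem_erase hk))
      (hYZ.mono (erase_subset y Y) (erase_subset x Z))
      (mt mem_of_mem_erase (disjoint_right.1 hYZ hx)) (notMem_erase x Z) (notMem_erase y Y)
      (mt mem_of_mem_erase hyZ) (ne_of_mem_of_not_mem hx hyZ)
    rwa [insert_erase hx, insert_erase hy] at hstep

end CauchyPermanent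

section Tuples

variable {α M : Type*} {n p r : ℕ}

lemma prod_Ioi_castSucc [CommMonoid M] (i : Fin n) (h : Fin (n + 1) → M) :
    ∏ j ∈ Ioi i.castSucc, h j = (∏ j ∈ Ioi i, h j.castSucc) * h (Fin.last n) := by
  simp only [← filter_lt_eq_Ioi, prod_filter, Fin.prod_univ_castSucc, Fin.castSucc_lt_castSucc_iff,
    Fin.castSucc_lt_last, if_true]

lemma removeNth_injective {w : Fin (n + 1) → α} (hw : Function.Injective w) (k : Fin (n + 1)) :
    Function.Injective (k.removeNth w) :=
  hw.comp Fin.succAbove_right_injective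

lemma image_removeNth {w : Fin (n + 1) → α} (hw : Function.Injective w) (k : Fin (n + 1)) :
    univ.image (k.removeNth w) = (univ.image w).erase (w k) := by
  rw [show k.removeNth w = w ∘ k.succAbove from rfl, ← image_image, Fin.image_succAbove_univ,
    ← image_erase hw, compl_singleton]

lemma init_injective {w : Fin (n + 1) → α} (hw : Function.Injective w) :
    Function.Injective (Fin.init w) :=
  hw.comp (Fin.castSucc_injective n)

lemma image_init {w : Fin (n + 1) → α} (hw : Function.Injective w) :
    univ.image (Fin.init w) = (univ.image w).erase (w (Fin.last n)) := by
  rw [← image_removeNth hw, Fin.removeNth_last]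

lemma disjoint_image_image {v : Fin p → α} {w : Fin r → α} (h : ∀ i j, v i ≠ w j) :
    Disjoint (univ.image v) (univ.image w) := by
  simpa [disjoint_left] using fun i j ↦ (h i j).symm

/-- The permutation of `Fin (n + 1)` that sends the last index to `k` and acts on the others as `σ`,
with the complement of `k` identified with `Fin n` in increasing order. -/
def permSnoc (k : Fin (n + 1)) (σ : Equiv.Perm (Fin n)) : Equiv.Perm (Fin (n + 1)) :=
  (finSuccEquivLast.trans (Equiv.optionCongr σ)).trans (finSuccEquiv' k).symm

lemma comp_permSnoc (w : Fin (n + 1) → α) (k : Fin (n + 1)) (σ : Equiv.Perm (Fin n)) :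
    w ∘ permSnoc k σ = Fin.snoc (k.removeNth w ∘ σ) (w k) := by
  funext i
  refine Fin.lastCases ?_ (fun i ↦ ?_) i <;> simp [permSnoc, Fin.removeNth]

lemma bijective_permSnoc :
    Function.Bijective fun x : Fin (n + 1) × Equiv.Perm (Fin n) ↦ permSnoc x.1 x.2 := by
  refine (Fintype.bijective_iff_injective_and_card _).2 ⟨?_, by
    simp [Fintype.card_perm, Nat.factorial_succ]⟩
  rintro ⟨k, σ⟩ ⟨k', σ'⟩ h
  obtain rfl : k = k' := by simpa [permSnoc] using DFunLike.congr_fun h (Fin.last n)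
  refine Prod.ext rfl (Equiv.optionCongr_injective ?_)
  ext1 i
  simpa [permSnoc] using DFunLike.congr_fun h (finSuccEquivLast.symm i)

theorem sum_comp_perm_succ [AddCommMonoid M] (w : Fin (n + 1) → α) (H : (Fin (n + 1) → α) → M) :
    ∑ σ : Equiv.Perm (Fin (n + 1)), H (w ∘ σ) =
      ∑ k, ∑ σ : Equiv.Perm (Fin n), H (Fin.snoc (k.removeNth w ∘ σ) (w k)) := by
  rw [← Fintype.sum_prod_type']
  exact (Fintype.sum_bijective _ bijective_permSnoc _ _ fun x ↦ by rw [comp_permSnoc]).symm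

lemma strictMono_snoc {f : Fin p → Fin r} :
    StrictMono (Fin.snoc (Fin.castSucc ∘ f) (Fin.last r) : Fin (p + 1) → Fin (r + 1)) ↔
      StrictMono f := by
  rw [← Fin.insertNth_last', Fin.strictMono_insertNth_iff]
  simp [StrictMono, Fin.castSucc_lt_last, Fin.last_le_iff, (Fin.castSucc_lt_last _).ne]

lemma exists_eq_castSucc_comp {d : Fin (p + 1) → Fin (r + 1)} (hd : StrictMono d)
    (h : d (Fin.last p) ≠ Fin.last r) : ∃ f, Fin.castSucc ∘ f = d :=
  ⟨fun i ↦ (d i).castPred ((hd.monotone (Fin.le_last i)).trans_lt (Fin.lt_last_iff_ne_last.2 h)).ne,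
    by ext; simp⟩

lemma exists_eq_snoc_castSucc_comp {d : Fin (p + 1) → Fin (r + 1)} (hd : StrictMono d)
    (h : d (Fin.last p) = Fin.last r) :
    ∃ f, (Fin.snoc (Fin.castSucc ∘ f) (Fin.last r) : Fin (p + 1) → Fin (r + 1)) = d := by
  have hlt (i : Fin p) : d i.castSucc ≠ Fin.last r := h ▸ (hd (Fin.castSucc_lt_last i)).ne
  refine ⟨fun i ↦ (d i.castSucc).castPred (hlt i), ?_⟩
  rw [← h]
  exact Fin.snoc_init_self d

theorem sum_strictMono_succ [AddCommMonoid M] (H : (Fin (p + 1) → Fin (r + 1)) → M) :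
    ∑ d with StrictMono d, H d =
      ∑ d : Fin (p + 1) → Fin r with StrictMono d, H (Fin.castSucc ∘ d) +
        ∑ d : Fin p → Fin r with StrictMono d, H (Fin.snoc (Fin.castSucc ∘ d) (Fin.last r)) := by
  rw [← sum_filter_add_sum_filter_not _ (fun d ↦ d (Fin.last p) ≠ Fin.last r)]
  simp only [filter_filter, not_not]
  congr 1 <;> symm
  · refine sum_nbij (Fin.castSucc ∘ ·) ?_ ?_ ?_ fun _ _ ↦ rfl
    · intro d hd
      have hd : StrictMono d := by simpa using hd
      simpa [(Fin.castSucc_lt_last _).ne] using Fin.strictMono_castSucc.comp hd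
    · exact ((Fin.castSucc_injective r).comp_left).injOn
    · intro d hd
      obtain ⟨hd, h⟩ : StrictMono d ∧ _ := by simpa using hd
      obtain ⟨f, rfl⟩ := exists_eq_castSucc_comp hd h
      exact ⟨f, mem_filter.2 ⟨mem_univ f, hd⟩, rfl⟩
  · refine sum_nbij (fun d ↦ Fin.snoc (Fin.castSucc ∘ d) (Fin.last r)) ?_ ?_ ?_ fun _ _ ↦ rfl
    · simp [strictMono_snoc]
    · exact fun f _ g _ h ↦ ((Fin.castSucc_injective r).comp_left) (Fin.snoc_injective2 h).1
    · intro d hd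
      obtain ⟨hd, h⟩ : StrictMono d ∧ _ := by simpa using hd
      obtain ⟨f, rfl⟩ := exists_eq_snoc_castSucc_comp hd h
      exact ⟨f, by simpa [strictMono_snoc] using hd, rfl⟩

end Tuples

section SymSum

variable {n : ℕ}

/-- The product of `scatter` over the pairs of entries of `w`, taken in order. -/
noncomputable def pairProd (q t : K) (w : Fin n → K) : K :=
  ∏ i, ∏ j ∈ Ioi i, scatter q t (w i) (w j)

/-- The symmetrization `Sym_w [H(w) ∏_{i<j} (t w_i - q w_j) / (w_i - w_j)]`. -/
noncomputable def symSum (q t : K) (H : (Fin n → K) → K) (w : Fin n → K) : K :=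
  ∑ σ : Equiv.Perm (Fin n), H (w ∘ σ) * pairProd q t (w ∘ σ)

/-- The two-parameter `q`-factorial, which is `[n]_q!` at `t = q⁻¹`. -/
noncomputable def qtFact (q t : K) (n : ℕ) : K :=
  ∏ m ∈ range n, qtInt q t (m + 1)

variable {q t : K}

lemma pairProd_snoc (v : Fin n → K) (b : K) :
    pairProd q t (Fin.snoc v b : Fin (n + 1) → K) =
      pairProd q t v * ∏ i, scatter q t (v i) b := by
  have hlast : Ioi (Fin.last n) = ∅ := Ioi_top
  simp [pairProd, Fin.prod_univ_castSucc, prod_Ioi_castSucc, prod_mul_distrib, hlast]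

lemma symSum_zero (H : (Fin 0 → K) → K) (w : Fin 0 → K) : symSum q t H w = H w := by
  simp [symSum, pairProd, Subsingleton.elim _ w]

lemma symSum_mul_of_symmetric {G : (Fin n → K) → K} {w : Fin n → K}
    (hG : ∀ σ : Equiv.Perm (Fin n), G (w ∘ σ) = G w) (H : (Fin n → K) → K) :
    symSum q t (fun v ↦ H v * G v) w = symSum q t H w * G w := by
  simp only [symSum, hG, sum_mul, mul_right_comm]

lemma symSum_mul_prod (H : (Fin n → K) → K) (g : K → K) {w : Fin n → K}
    (hw : Function.Injective w) :
    symSum q t (fun v ↦ H v * ∏ i, g (v i)) w = symSum q t H w * ∏ a ∈ univ.image w, g a := by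
  rw [prod_image hw.injOn]
  exact symSum_mul_of_symmetric (fun σ ↦ Equiv.prod_comp σ fun i ↦ g (w i)) H

lemma symSum_mul_const (H : (Fin n → K) → K) (c : K) (w : Fin n → K) :
    symSum q t (fun v ↦ H v * c) w = symSum q t H w * c :=
  symSum_mul_of_symmetric (G := fun _ ↦ c) (fun _ ↦ rfl) H

theorem symSum_succ (H : (Fin (n + 1) → K) → K) {w : Fin (n + 1) → K}
    (hw : Function.Injective w) :
    symSum q t H w = ∑ k, residue q t (univ.image w) (w k) *
      symSum q t (fun v ↦ H (Fin.snoc v (w k))) (k.removeNth w) := by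
  rw [symSum, sum_comp_perm_succ w fun v ↦ H v * pairProd q t v]
  refine sum_congr rfl fun k _ ↦ ?_
  rw [residue, ← image_removeNth hw, mul_comm,
    ← symSum_mul_prod _ (scatter q t · (w k)) (removeNth_injective hw k), symSum]
  refine sum_congr rfl fun σ _ ↦ ?_
  rw [pairProd_snoc]
  ring

theorem symSum_one {w : Fin n → K} (hw : Function.Injective w) :
    symSum q t (fun _ ↦ 1) w = qtFact q t n := by
  induction n with
  | zero => simp [symSum_zero, qtFact]
  | succ n ih =>
    rw [symSum_succ _ hw, sum_congr rfl fun k _ ↦ by rw [ih (removeNth_injective hw k)], ← sum_mul,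
      ← sum_image (g := w) (f := residue q t (univ.image w)) hw.injOn, sum_residue,
      card_image_of_injective _ hw, card_fin, qtFact, qtFact, prod_range_succ, mul_comm]

end SymSum

section TupleExpansion

variable {q t : K} {p r : ℕ}

theorem cauchyPermanent_image_eq_sum_row (ht : t ≠ 0) {y : Fin (p + 1) → K} {z : Fin (r + 1) → K}
    (hy : Function.Injective y) (hz : Function.Injective z) (hyz : ∀ i j, y i ≠ z j) :
    cauchyPermanent q t (univ.image y) (univ.image z) =
      ∑ k, residue q t (univ.image z) (z k) *
        (cauchyPermanent q t (univ.image (Fin.init y)) (univ.image (k.removeNth z)) *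
          ((∏ i, scatter q t (z k) (Fin.init y i)) / (y (Fin.last p) - z k))) := by
  rw [(expandsAt_cauchyPermanent ht _).row_erase (disjoint_image_image hyz)
      (mem_image_of_mem y (mem_univ (Fin.last p))), ← image_init hy, rowExpansion, cauchySum,
    sum_image hz.injOn]
  refine sum_congr rfl fun k _ ↦ ?_
  rw [rowCoeff, image_removeNth hz, prod_image (init_injective hy).injOn]
  ring

theorem cauchyPermanent_image_eq_add_sum_col (ht : t ≠ 0) {y : Fin (p + 1) → K}
    {z : Fin (r + 1) → K} (hy : Function.Injective y) (hz : Function.Injective z)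
    (hyz : ∀ i j, y i ≠ z j) :
    cauchyPermanent q t (univ.image y) (univ.image z) =
      cauchyPermanent q t (univ.image y) (univ.image (Fin.init z)) *
          ∏ a ∈ univ.image y, scatter q t (z (Fin.last r)) a +
        ∑ k, residue q t (univ.image y) (y k) *
          (cauchyPermanent q t (univ.image (k.removeNth y)) (univ.image (Fin.init z)) *
            (∏ a ∈ univ.image (k.removeNth y), scatter q t (z (Fin.last r)) a) *
            (t ^ ((r : ℤ) - p) / (y k - z (Fin.last r)))) := by
  have hr : #(univ.image (Fin.init z)) = r := by
    rw [card_image_of_injective _ (init_injective hz), card_fin]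
  rw [(expandsAt_cauchyPermanent ht _).col (disjoint_image_image hyz)
      (mem_image_of_mem z (mem_univ (Fin.last r))), ← image_init hz, colExpansion, hr,
    card_image_of_injective _ hy, card_fin, Nat.cast_add_one, add_sub_add_right_eq_sub,
    sum_image hy.injOn, mul_sum, mul_comm]
  congr 1
  refine sum_congr rfl fun k _ ↦ ?_
  rw [image_removeNth hy]
  ring

end TupleExpansion

section RowSummand

variable {q t : K} {p r : ℕ}

/-- The function of `w = (w_1, …, w_r)` symmetrized on the left-hand side of the theorem, for
general `t` in place of `q⁻¹`. -/
noncomputable def rowSummand (q t : K) (h : p ≤ r) (y : Fin p → K) (w : Fin r → K) : K :=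
  ∏ i, (1 / (y i - w (shiftIdx p r h i)) *
    ∏ j ∈ Ioi i, scatter q t (w (shiftIdx p r h j)) (y i))

lemma rowSummand_snoc (h : p ≤ r) (y : Fin (p + 1) → K) (v : Fin r → K) (b : K) :
    rowSummand q t (Nat.succ_le_succ h) y (Fin.snoc v b) = rowSummand q t h (Fin.init y) v *
      ((∏ i, scatter q t b (Fin.init y i)) / (y (Fin.last p) - b)) := by
  have hlast : Ioi (Fin.last p) = ∅ := Ioi_top
  have hshift (i : Fin p) :
      shiftIdx (p + 1) (r + 1) (Nat.succ_le_succ h) i.castSucc = (shiftIdx p r h i).castSucc := by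
    ext
    simp [shiftIdx]
  have hshift_last :
      shiftIdx (p + 1) (r + 1) (Nat.succ_le_succ h) (Fin.last p) = Fin.last r := by
    ext
    simp [shiftIdx, h]
  simp only [rowSummand, Fin.prod_univ_castSucc, prod_Ioi_castSucc, prod_mul_distrib, hlast,
    hshift, hshift_last, Fin.snoc_castSucc, Fin.snoc_last, prod_empty, Fin.init]
  ring

theorem symSum_rowSummand (ht : t ≠ 0) (h : p ≤ r) {y : Fin p → K} {z : Fin r → K}
    (hy : Function.Injective y) (hz : Function.Injective z) (hyz : ∀ i j, y i ≠ z j) :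
    symSum q t (rowSummand q t h y) z =
      qtFact q t (r - p) * cauchyPermanent q t (univ.image y) (univ.image z) := by
  induction p generalizing r with
  | zero =>
    have hone : rowSummand q t h y = fun _ ↦ 1 := by
      funext
      simp [rowSummand]
    simpa [hone, cauchyPermanent_empty_left] using symSum_one hz
  | succ p ih =>
    obtain ⟨r, rfl⟩ := Nat.exists_eq_add_one_of_ne_zero (Nat.ne_zero_of_lt h)
    rw [symSum_succ _ hz, cauchyPermanent_image_eq_sum_row ht hy hz hyz, mul_sum]
    refine sum_congr rfl fun k _ ↦ ?_
    simp only [rowSummand_snoc (Nat.le_of_succ_le_succ h), symSum_mul_const]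
    rw [ih _ (init_injective hy) (removeNth_injective hz k) fun _ _ ↦ hyz _ _,
      Nat.add_sub_add_right]
    ring

end RowSummand

section ColSummand

variable {q t : K} {p r : ℕ}

/-- The function of `y = (y_1, …, y_p)` symmetrized in the `d`-th term on the right-hand side of the
theorem, for general `t` in place of `q⁻¹`. -/
noncomputable def colSummand (q t : K) (d : Fin p → Fin r) (z : Fin r → K) (y : Fin p → K) : K :=
  ∏ i, (t ^ ((d i : ℤ) - i) / (y i - z (d i)) * ∏ j ∈ Ioi (d i), scatter q t (z j) (y i))

lemma colSummand_castSucc (d : Fin p → Fin r) (z : Fin (r + 1) → K) (y : Fin p → K) :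
    colSummand q t (Fin.castSucc ∘ d) z y =
      colSummand q t d (Fin.init z) y * ∏ i, scatter q t (z (Fin.last r)) (y i) := by
  simp only [colSummand, Function.comp_apply, prod_Ioi_castSucc, ← prod_mul_distrib, mul_assoc,
    Fin.val_castSucc, Fin.init]

lemma colSummand_snoc (d : Fin p → Fin r) (z : Fin (r + 1) → K) (v : Fin p → K) (b : K) :
    colSummand q t (Fin.snoc (Fin.castSucc ∘ d) (Fin.last r)) z (Fin.snoc v b) =
      colSummand q t d (Fin.init z) v * (∏ i, scatter q t (z (Fin.last r)) (v i)) *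
        (t ^ ((r : ℤ) - p) / (b - z (Fin.last r))) := by
  have hlast : Ioi (Fin.last r) = ∅ := Ioi_top
  rw [← colSummand_castSucc, colSummand, Fin.prod_univ_castSucc]
  simp [colSummand, hlast]

lemma symSum_colSummand_castSucc (d : Fin p → Fin r) (z : Fin (r + 1) → K) {y : Fin p → K}
    (hy : Function.Injective y) :
    symSum q t (colSummand q t (Fin.castSucc ∘ d) z) y =
      symSum q t (colSummand q t d (Fin.init z)) y *
        ∏ a ∈ univ.image y, scatter q t (z (Fin.last r)) a := by
  rw [← symSum_mul_prod _ _ hy]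
  simp only [← colSummand_castSucc]

lemma symSum_colSummand_snoc (d : Fin p → Fin r) (z : Fin (r + 1) → K) {y : Fin (p + 1) → K}
    (hy : Function.Injective y) :
    symSum q t (colSummand q t (Fin.snoc (Fin.castSucc ∘ d) (Fin.last r)) z) y =
      ∑ k, residue q t (univ.image y) (y k) *
        (symSum q t (colSummand q t d (Fin.init z)) (k.removeNth y) *
          (∏ a ∈ univ.image (k.removeNth y), scatter q t (z (Fin.last r)) a) *
          (t ^ ((r : ℤ) - p) / (y k - z (Fin.last r)))) := by
  rw [symSum_succ _ hy]
  refine sum_congr rfl fun k _ ↦ ?_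
  simp only [colSummand_snoc]
  rw [symSum_mul_const, symSum_mul_prod _ _ (removeNth_injective hy k)]

lemma sum_symSum_colSummand_fin_zero (y : Fin 0 → K) (z : Fin r → K) :
    ∑ d : Fin 0 → Fin r with StrictMono d, symSum q t (colSummand q t d z) y =
      cauchyPermanent q t (univ.image y) (univ.image z) := by
  simp [Subsingleton.strictMono, symSum_zero, colSummand, cauchyPermanent_empty_left]

theorem sum_symSum_colSummand (ht : t ≠ 0) {y : Fin p → K} {z : Fin r → K}
    (hy : Function.Injective y) (hz : Function.Injective z) (hyz : ∀ i j, y i ≠ z j) :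
    ∑ d : Fin p → Fin r with StrictMono d, symSum q t (colSummand q t d z) y =
      cauchyPermanent q t (univ.image y) (univ.image z) := by
  induction r generalizing p with
  | zero =>
    cases p with
    | zero => exact sum_symSum_colSummand_fin_zero y z
    | succ p => simp [cauchyPermanent_empty_right]
  | succ r ih =>
    cases p with
    | zero => exact sum_symSum_colSummand_fin_zero y z
    | succ p =>
      rw [sum_strictMono_succ, cauchyPermanent_image_eq_add_sum_col ht hy hz hyz]
      simp only [symSum_colSummand_castSucc _ z hy, symSum_colSummand_snoc _ z hy]
      rw [← sum_mul, ih hy (init_injective hz) fun _ _ ↦ hyz _ _, sum_comm]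
      congr 1
      refine sum_congr rfl fun k _ ↦ ?_
      rw [← mul_sum, ← sum_mul, ← sum_mul, ih (removeNth_injective hy k)
        (init_injective hz) fun _ _ ↦ hyz _ _]

end ColSummand

end DeformedCauchy

theorem q_Gyz_identity_general {K : Type*} [Field K] {p r : ℕ} (hpr : p ≤ r) (q t : K)
    (ht : t ≠ 0) (y : Fin p → K) (z : Fin r → K) (hy : Function.Injective y)
    (hz : Function.Injective z) (hyz : ∀ i j, y i ≠ z j) :
    ∑ σ : Equiv.Perm (Fin r),
      (∏ i : Fin p, ((1 / (y i - z (σ (shiftIdx p r hpr i)))) *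
        ∏ j ∈ Finset.Ioi i, ((q * y i - t * z (σ (shiftIdx p r hpr j))) /
          (y i - z (σ (shiftIdx p r hpr j)))))) *
      (∏ i : Fin r, ∏ j ∈ Finset.Ioi i,
        (t * z (σ i) - q * z (σ j)) / (z (σ i) - z (σ j))) =
    DeformedCauchy.qtFact q t (r - p) *
      ∑ d ∈ Finset.univ.filter (fun d : Fin p → Fin r => StrictMono d),
        ∑ τ : Equiv.Perm (Fin p),
          (∏ i : Fin p, ((t ^ (((d i : ℕ) : ℤ) - ((i : ℕ) : ℤ)) / (y (τ i) - z (d i))) *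
            ∏ j ∈ Finset.Ioi (d i), ((q * y (τ i) - t * z j) / (y (τ i) - z j)))) *
          (∏ i : Fin p, ∏ j ∈ Finset.Ioi i,
            (t * y (τ i) - q * y (τ j)) / (y (τ i) - y (τ j))) := by
  simp only [← DeformedCauchy.scatter_swap q t]
  exact (DeformedCauchy.symSum_rowSummand ht hpr hy hz hyz).trans
    (congrArg _ (DeformedCauchy.sum_symSum_colSummand ht hy hz hyz).symm)

/-- The trigonometric analogue (formula (yzq)):
`Sym_z[ ∏_i (1/(y_i − z_{i+r−p})) ∏_{i<j≤p} (q y_i − q⁻¹ z_{j+r−p})/(y_i − z_{j+r−p})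
· ∏_{i<j} (q⁻¹z_i − q z_j)/(z_i − z_j) ] = [r−p]_q! · ∑_d Sym_y[ … ]`. -/
theorem q_Gyz_identity (p r : ℕ) (hp : 0 < p) (hpr : p ≤ r) (q : ℂ) (hq : q ≠ 0)
    (y : Fin p → ℂ) (z : Fin r → ℂ) (hy : Function.Injective y)
    (hz : Function.Injective z) (hyz : ∀ i j, y i ≠ z j) :
    ∑ σ : Equiv.Perm (Fin r),
      (∏ i : Fin p, ((1 / (y i - z (σ (shiftIdx p r hpr i)))) *
        ∏ j ∈ Finset.Ioi i, ((q * y i - q⁻¹ * z (σ (shiftIdx p r hpr j))) /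
          (y i - z (σ (shiftIdx p r hpr j)))))) *
      (∏ i : Fin r, ∏ j ∈ Finset.Ioi i,
        (q⁻¹ * z (σ i) - q * z (σ j)) / (z (σ i) - z (σ j))) =
    qFact q (r - p) *
      ∑ d ∈ Finset.univ.filter (fun d : Fin p → Fin r => StrictMono d),
        ∑ τ : Equiv.Perm (Fin p),
          (∏ i : Fin p, ((q ^ (((i : ℕ) : ℤ) - ((d i : ℕ) : ℤ)) / (y (τ i) - z (d i))) *
            ∏ j ∈ Finset.Ioi (d i), ((q * y (τ i) - q⁻¹ * z j) / (y (τ i) - z j)))) *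
          (∏ i : Fin p, ∏ j ∈ Finset.Ioi i,
            (q⁻¹ * y (τ i) - q * y (τ j)) / (y (τ i) - y (τ j))) := by
  simpa only [inv_zpow', neg_sub, qFact, qInt, DeformedCauchy.qtFact, DeformedCauchy.qtInt]
    using q_Gyz_identity_general hpr q q⁻¹ (inv_ne_zero hq) y z hy hz hyz
end
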